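/- arXiv:2203.04620 — 2 statements merged into one kernel-verified Lean document; each statement's English description precedes it below -/
import Mathlib

section
/- Let P be a Gorenstein polytope of dimension d and degree s. If d ≥ 3s, then P is a lattice pyramid. -/
open Pointwise

/-- A point of `ℝ^d` is a lattice point if all its coordinates are integers. -/
def IsLatticePt {d : ℕ} (x : Fin d → ℝ) : Prop := ∀ i, ∃ z : ℤ, x i = (z : ℝ)

/-- A lattice polytope is the (non-empty) convex hull of finitely many lattice points. -/
def IsLatticePolytope {d : ℕ} (P : Set (Fin d → ℝ)) : Prop :=
  ∃ V : Finset (Fin d → ℝ), V.Nonempty ∧ (∀ v ∈ V, IsLatticePt v) ∧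
    P = convexHull ℝ (V : Set (Fin d → ℝ))

/-- The dimension of a polytope: the dimension of the direction of its affine hull. -/
noncomputable def polyDim {d : ℕ} (P : Set (Fin d → ℝ)) : ℕ :=
  Module.finrank ℝ (affineSpan ℝ P).direction

/-- A polytope is hollow if its relative interior contains no lattice point. -/
def IsHollow {d : ℕ} (P : Set (Fin d → ℝ)) : Prop :=
  ∀ x ∈ intrinsicInterior ℝ P, ¬ IsLatticePt x

/-- A facet of `P`: a non-empty exposed face of dimension `dim P - 1`. -/
def IsFacet {d : ℕ} (P F : Set (Fin d → ℝ)) : Prop :=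
  IsExposed ℝ P F ∧ F.Nonempty ∧ polyDim F + 1 = polyDim P

/-- An affine functional is integral on `P` if it takes integer values on all
lattice points of the affine hull of `P`. -/
def IsIntegralOn {d : ℕ} (P : Set (Fin d → ℝ)) (u : (Fin d → ℝ) →ᵃ[ℝ] ℝ) : Prop :=
  ∀ y ∈ affineSpan ℝ P, IsLatticePt y → ∃ z : ℤ, u y = (z : ℝ)

/-- `P` is reflexive: there is a lattice point `x` in the relative interior of `P`
such that every facet of `P` has lattice distance one from `x`, i.e. for every facet `F`
there is an integral affine functional that is constant on `F` and exceeds its value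
at `x` by exactly `1`. -/
def IsReflexivePolytope {d : ℕ} (P : Set (Fin d → ℝ)) : Prop :=
  ∃ x ∈ intrinsicInterior ℝ P, IsLatticePt x ∧
    ∀ F : Set (Fin d → ℝ), IsFacet P F →
      ∃ u : (Fin d → ℝ) →ᵃ[ℝ] ℝ, IsIntegralOn P u ∧ ∀ f ∈ F, u f = u x + 1

/-- `P` is Gorenstein if some positive integer multiple `r • P` is reflexive. -/
def IsGorenstein {d : ℕ} (P : Set (Fin d → ℝ)) : Prop :=
  ∃ r : ℕ, 0 < r ∧ IsReflexivePolytope ((r : ℝ) • P)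

/-- `P` is Gorenstein of codegree `r` if `r • P` is reflexive (`r` positive). -/
def IsGorensteinOfCodeg {d : ℕ} (P : Set (Fin d → ℝ)) (r : ℕ) : Prop :=
  0 < r ∧ IsReflexivePolytope ((r : ℝ) • P)

/-- The codegree of `P`: the smallest positive integer `r` such that `r • P` is not hollow. -/
noncomputable def polyCodeg {d : ℕ} (P : Set (Fin d → ℝ)) : ℕ :=
  sInf {r : ℕ | 0 < r ∧ ¬ IsHollow ((r : ℝ) • P)}

/-- The degree of `P`: `dim P + 1 - codeg P`. -/
noncomputable def polyDeg {d : ℕ} (P : Set (Fin d → ℝ)) : ℕ :=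
  polyDim P + 1 - polyCodeg P

/-- Unimodular equivalence of lattice polytopes: an affine map carrying `P` onto `Q`,
with an affine inverse on affine hulls, such that both maps preserve lattice points of
the affine hulls. -/
def LatticeIso {d e : ℕ} (P : Set (Fin d → ℝ)) (Q : Set (Fin e → ℝ)) : Prop :=
  ∃ (f : (Fin d → ℝ) →ᵃ[ℝ] (Fin e → ℝ)) (g : (Fin e → ℝ) →ᵃ[ℝ] (Fin d → ℝ)),
    f '' P = Q ∧ g '' Q = P ∧
    (∀ x ∈ affineSpan ℝ P, g (f x) = x) ∧ (∀ y ∈ affineSpan ℝ Q, f (g y) = y) ∧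
    (∀ x ∈ affineSpan ℝ P, IsLatticePt x → IsLatticePt (f x)) ∧
    (∀ y ∈ affineSpan ℝ Q, IsLatticePt y → IsLatticePt (g y))

/-- The lattice pyramid `conv(P' × {0}, (0,1))` over `P' ⊆ ℝ^m`. -/
def pyramidOver {m : ℕ} (P' : Set (Fin m → ℝ)) : Set (Fin (m + 1) → ℝ) :=
  convexHull ℝ ((fun x => Fin.snoc x (0 : ℝ)) '' P' ∪ {Fin.snoc (0 : Fin m → ℝ) (1 : ℝ)})

/-- `P` is a lattice pyramid if it is a single lattice point or is isomorphic to a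
lattice pyramid over a lattice polytope. -/
def IsLatticePyramid {d : ℕ} (P : Set (Fin d → ℝ)) : Prop :=
  (∃ x : Fin d → ℝ, IsLatticePt x ∧ P = {x}) ∨
  ∃ (m : ℕ) (P' : Set (Fin m → ℝ)), IsLatticePolytope P' ∧ LatticeIso P (pyramidOver P')

/-- The Cayley polytope `P_1 * ⋯ * P_l ⊆ ℝ^{n+l}` of `P_1, …, P_l ⊆ ℝ^n`:
the convex hull of the sets `P_i × {e_i}`. -/
def cayley {n l : ℕ} (P : Fin l → Set (Fin n → ℝ)) : Set (Fin (n + l) → ℝ) :=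
  convexHull ℝ (⋃ i : Fin l, (fun x => Fin.append x (Pi.single i (1 : ℝ))) '' P i)

/-- The Cayley polytope `F * G ⊆ ℝ^{n+2}` of two polytopes `F, G ⊆ ℝ^n`. -/
def cayleyTwo {n : ℕ} (F G : Set (Fin n → ℝ)) : Set (Fin (n + 2) → ℝ) :=
  convexHull ℝ
    ((fun x => Fin.append x ![(1 : ℝ), 0]) '' F ∪ (fun x => Fin.append x ![(0 : ℝ), 1]) '' G)

/-- `P` is a Cayley join of `F` and `G` if `P ≅ F * G` and `dim F + dim G = dim P - 1`. -/
def IsCayleyJoin {d n : ℕ} (P : Set (Fin d → ℝ)) (F G : Set (Fin n → ℝ)) : Prop :=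
  LatticeIso P (cayleyTwo F G) ∧ polyDim F + polyDim G + 1 = polyDim P

/-- `P` is reducible with factors `F` and `G`: a Cayley join with
`codeg F + codeg G = codeg P`. -/
def IsReducibleWith {d n : ℕ} (P : Set (Fin d → ℝ)) (F G : Set (Fin n → ℝ)) : Prop :=
  IsCayleyJoin P F G ∧ polyCodeg F + polyCodeg G = polyCodeg P

/-- `P` is reducible: it is a single lattice point (by convention) or is reducible
with some factors `F` and `G` which are lattice polytopes. -/
def IsReducible {d : ℕ} (P : Set (Fin d → ℝ)) : Prop :=
  (∃ x : Fin d → ℝ, IsLatticePt x ∧ P = {x}) ∨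
  ∃ (n : ℕ) (F G : Set (Fin n → ℝ)), IsLatticePolytope F ∧ IsLatticePolytope G ∧
    IsReducibleWith P F G

/-- `P` is a Cayley polytope: a single lattice point, or isomorphic to a Cayley polytope
of `l > 1` lattice polytopes. -/
def IsCayleyPolytope {d : ℕ} (P : Set (Fin d → ℝ)) : Prop :=
  (∃ x : Fin d → ℝ, IsLatticePt x ∧ P = {x}) ∨
  ∃ (n l : ℕ) (Q : Fin l → Set (Fin n → ℝ)), 1 < l ∧ (∀ i, IsLatticePolytope (Q i)) ∧
    LatticeIso P (cayley Q)

/-- `P` is IDP if for every `k ≥ 2` every lattice point of `k • P` is a sum of `k`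
lattice points of `P`. -/
def IsIDP {d : ℕ} (P : Set (Fin d → ℝ)) : Prop :=
  ∀ k : ℕ, 2 ≤ k → ∀ x : Fin d → ℝ, IsLatticePt x → x ∈ (k : ℝ) • P →
    ∃ p : Fin k → (Fin d → ℝ), (∀ i, p i ∈ P ∧ IsLatticePt (p i)) ∧ x = ∑ i, p i

/-- The standard simplex `Δ_s = conv(0, e_1, …, e_s) ⊆ ℝ^s`. -/
def stdSimplexLP (s : ℕ) : Set (Fin s → ℝ) :=
  convexHull ℝ (insert 0 (Set.range fun i : Fin s => Pi.single i (1 : ℝ)))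

/-- The product of `F ⊆ ℝ^m` and `G ⊆ ℝ^n` inside `ℝ^{m+n}`. -/
def prodPoly {m n : ℕ} (F : Set (Fin m → ℝ)) (G : Set (Fin n → ℝ)) : Set (Fin (m + n) → ℝ) :=
  (fun p : (Fin m → ℝ) × (Fin n → ℝ) => Fin.append p.1 p.2) '' (F ×ˢ G)

/-- The free join `conv(F × 0 × {0} ∪ 0 × G × {1}) ⊆ ℝ^m × ℝ^n × ℝ`. -/
def freeJoin {m n : ℕ} (F : Set (Fin m → ℝ)) (G : Set (Fin n → ℝ)) :
    Set (Fin (m + n + 1) → ℝ) :=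
  convexHull ℝ
    ((fun x => Fin.snoc (Fin.append x (0 : Fin n → ℝ)) (0 : ℝ)) '' F ∪
     (fun y => Fin.snoc (Fin.append (0 : Fin m → ℝ) y) (1 : ℝ)) '' G)

/-!
Let `V` be the vertex set of `P` and `L ⊆ ℝ^V` the space of affine functionals restricted to `V`, so
that `dim L = dim P + 1`. The facets of `P` are the elements of minimal support among the nonzero
nonnegative vectors of `L`. The interior lattice point of `r • P` is `∑ w v • v` with positive
weights of sum `r`, and reflexivity says that the facet functionals normalized by `f ⬝ᵥ w = 1` are
integral. Let `B` be the facet–vertex matrix of their values: its entries are natural numbers,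
`B w = 1`, there is a positive `z` with `z B = 1`, and `rank B ≤ dim P + 1`.

Replace `w` and `z` by basic solutions `x` and `y` of the same systems. Weighting the entries of `B`
by `y j * B j v * x v` gives `3 * r ≤ |supp x| + |supp y| + t`, where `t` counts the entries with
`x v = y j = B j v = 1`. If no row of `B` is a unit vector, a rank estimate bounds both
`|supp x| + t / 2` and `|supp y| + t / 2` by `rank B`, so `3 * r ≤ 2 * (dim P + 1)`, contrary to
`dim P ≥ 3 * deg P`. A unit row is a facet functional with value one at a single vertex and zero at
all others, which exhibits `P` as a lattice pyramid.
-/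

theorem exists_finset_meeting_moved_sets {α : Type*} [Fintype α] (f : α → α) :
    ∃ T : Finset α, 2 * T.card ≤ Fintype.card α ∧
      ∀ S : Finset α, S.Nonempty → (∀ a ∈ S, f a ∈ S) → (∀ a ∈ S, f a ≠ a) → ∃ a ∈ S, a ∈ T := by
  classical
  -- For an arbitrary order, the minimum of `S` is an ascent of `f` and the maximum is a descent.
  let _ : LinearOrder α := LinearOrder.lift' (Fintype.equivFin α) (Fintype.equivFin α).injective
  let ascents : Finset α := {a | a < f a}
  let descents : Finset α := {a | f a < a}
  have hcard : ascents.card + descents.card ≤ Fintype.card α := by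
    rw [← Finset.card_union_of_disjoint
      (Finset.disjoint_filter.2 fun a _ h => not_lt_of_gt h)]
    exact Finset.card_le_univ _
  rcases le_total ascents.card descents.card with hle | hle
  · refine ⟨ascents, by omega, fun S hS hmaps hmoved => ⟨S.min' hS, S.min'_mem hS, ?_⟩⟩
    have hmem := S.min'_mem hS
    simpa [ascents] using (S.min'_le _ (hmaps _ hmem)).lt_of_ne (hmoved _ hmem).symm
  · refine ⟨descents, by omega, fun S hS hmaps hmoved => ⟨S.max' hS, S.max'_mem hS, ?_⟩⟩
    have hmem := S.max'_mem hS
    simpa [descents] using (S.le_max' _ (hmaps _ hmem)).lt_of_ne (hmoved _ hmem)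

section Substochastic

variable {Q : Type*} [Fintype Q] {M : Matrix Q Q ℝ}

theorem eq_max_of_mulVec_eq_self (hM : ∀ q t, 0 ≤ M q t) (hrow : ∀ q, ∑ t, M q t ≤ 1)
    {h : Q → ℝ} (hh : M.mulVec h = h) {q : Q} (hq : 0 < h q) (hmax : ∀ t, h t ≤ h q) :
    ∑ t, M q t = 1 ∧ ∀ t, M q t ≠ 0 → h t = h q := by
  have hterm : ∀ t ∈ Finset.univ, 0 ≤ M q t * (h q - h t) := fun t _ =>
    mul_nonneg (hM q t) (sub_nonneg.2 (hmax t))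
  have hsum : ∑ t, M q t * (h q - h t) = ((∑ t, M q t) - 1) * h q := by
    simp only [mul_sub, Finset.sum_sub_distrib, ← Finset.sum_mul, sub_mul, one_mul]
    exact congrArg _ (congrFun hh q)
  have hone : ∑ t, M q t = 1 := by
    refine le_antisymm (hrow q) (sub_nonneg.1 ?_)
    exact nonneg_of_mul_nonneg_left (hsum ▸ Finset.sum_nonneg hterm) hq
  rw [hone, sub_self, zero_mul, Finset.sum_eq_zero_iff_of_nonneg hterm] at hsum
  refine ⟨hone, fun t ht => ?_⟩
  linarith [(mul_eq_zero.1 (hsum t (Finset.mem_univ t))).resolve_left ht]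

theorem exists_ne_apply_ne_zero_of_sum_eq_one {m : Q → ℝ} {q : Q} (hq : m q < 1)
    (hsum : ∑ t, m t = 1) : ∃ t, t ≠ q ∧ m t ≠ 0 := by
  by_contra! hzero
  rw [Fintype.sum_eq_single q hzero] at hsum
  exact hq.ne hsum

theorem exists_finset_forall_mulVec_eq_self_le_zero (hM : ∀ q t, 0 ≤ M q t)
    (hrow : ∀ q, ∑ t, M q t ≤ 1) (hdiag : ∀ q, M q q < 1) :
    ∃ T : Finset Q, 2 * T.card ≤ Fintype.card Q ∧
      ∀ h : Q → ℝ, M.mulVec h = h → (∀ t ∈ T, h t = 0) → h ≤ 0 := by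
  classical
  have hnext : ∀ q, ∃ t, ∑ s, M q s = 1 → t ≠ q ∧ M q t ≠ 0 := fun q => by
    by_cases hq : ∑ s, M q s = 1
    · obtain ⟨t, ht⟩ := exists_ne_apply_ne_zero_of_sum_eq_one (hdiag q) hq
      exact ⟨t, fun _ => ht⟩
    · exact ⟨q, fun h => absurd h hq⟩
  choose next hnext using hnext
  obtain ⟨T, hT, hmeet⟩ := exists_finset_meeting_moved_sets next
  refine ⟨T, hT, fun h hh hzero => ?_⟩
  by_contra hpos
  obtain ⟨p, hp⟩ : ∃ p, 0 < h p := by simpa [Pi.le_def] using hpos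
  have : Nonempty Q := ⟨p⟩
  obtain ⟨q, hmax⟩ := Finite.exists_max h
  have hq : 0 < h q := hp.trans_le (hmax p)
  have hprop : ∀ a, h a = h q → ∑ t, M a t = 1 ∧ ∀ t, M a t ≠ 0 → h t = h q := fun a ha => by
    rw [← ha]
    exact eq_max_of_mulVec_eq_self hM hrow hh (ha ▸ hq) (ha ▸ hmax)
  obtain ⟨a, ha, haT⟩ := hmeet {a | h a = h q} ⟨q, by simp⟩
    (fun a ha => by
      have ha' := hprop a (by simpa using ha)
      simpa using ha'.2 _ (hnext a ha'.1).2)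
    (fun a ha => (hnext a (hprop a (by simpa using ha)).1).1)
  exact hq.ne' ((Finset.mem_filter.1 ha).2 ▸ hzero a haT)

theorem card_le_two_mul_rank_one_sub [DecidableEq Q] (hM : ∀ q t, 0 ≤ M q t)
    (hrow : ∀ q, ∑ t, M q t ≤ 1) (hdiag : ∀ q, M q q < 1) :
    Fintype.card Q ≤ 2 * (1 - M).rank := by
  obtain ⟨T, hT, hle⟩ := exists_finset_forall_mulVec_eq_self_le_zero hM hrow hdiag
  -- A fixed vector of `M` is determined by its values on `T`, which bounds the kernel of `1 - M`.
  let restrict : (1 - M).mulVecLin.ker →ₗ[ℝ] (T → ℝ) :=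
    (LinearMap.funLeft ℝ ℝ (Subtype.val : T → Q)).comp (Submodule.subtype _)
  have hinj : Function.Injective restrict := by
    refine (injective_iff_map_eq_zero _).2 fun ⟨h, hker⟩ hzero => Subtype.ext ?_
    have hh : M.mulVec h = h := by
      simpa [Matrix.sub_mulVec, sub_eq_zero, eq_comm] using hker
    have hT0 : ∀ t ∈ T, h t = 0 := fun t ht => congrFun hzero ⟨t, ht⟩
    refine le_antisymm (hle h hh hT0) (neg_nonpos.1 (hle (-h) ?_ fun t ht => ?_))
    · rw [Matrix.mulVec_neg, hh]
    · simp [hT0 t ht]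
  have hker := LinearMap.finrank_le_finrank_of_injective hinj
  have hrank := (1 - M).mulVecLin.finrank_range_add_finrank_ker
  simp only [Module.finrank_fintype_fun_eq_card, Fintype.card_coe] at hker hrank
  simp only [Matrix.rank]
  omega

end Substochastic

theorem card_add_rank_mul_le {K m n l : Type*} [Field K] [Fintype m] [Fintype n]
    {B : Matrix m n K} {E : Matrix l m K} {s : Finset n} (hs : LinearIndepOn K B.col s)
    (hEB : ∀ i ∈ s, ∀ k, (E * B) k i = 0) : s.card + (E * B).rank ≤ B.rank := by
  classical
  let g := E.mulVecLin.domRestrict B.mulVecLin.range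
  have hrange : g.range = (E * B).mulVecLin.range := by
    rw [LinearMap.range_domRestrict, Matrix.mulVecLin_mul, LinearMap.range_comp]
  have hcol : ∀ i, B.col i = B.mulVecLin (Pi.single i 1) := fun i => by simp
  have hmem : ∀ i : s, (⟨B.col i, hcol i ▸ LinearMap.mem_range_self _ _⟩ : B.mulVecLin.range) ∈
      g.ker := fun i => by
    rw [LinearMap.mem_ker]
    exact funext fun k => hEB i i.2 k
  have hindep : LinearIndependent K fun i : s => (⟨_, hmem i⟩ : g.ker) :=
    LinearIndependent.of_comp (B.mulVecLin.range.subtype.comp g.ker.subtype) hs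
  have hcard := hindep.fintype_card_le_finrank
  have hnullity := g.finrank_range_add_finrank_ker
  rw [Fintype.card_coe] at hcard
  rw [hrange] at hnullity
  simp only [Matrix.rank]
  omega

section TightPairs

variable {I J : Type*} [Fintype I] [Fintype J] {B : Matrix J I ℝ} {w x : I → ℝ} {y : J → ℝ}

theorem eq_one_of_dotProduct_eq_one {a : I → ℝ} (ha : ∀ i, a i = 0 ∨ 1 ≤ a i) (hx : 0 ≤ x)
    (h : a ⬝ᵥ x = 1) {k : I} (hxk : x k = 1) (hak : a k ≠ 0) :
    a k = 1 ∧ ∀ i, i ≠ k → x i ≠ 0 → a i = 0 := by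
  classical
  have ha0 : ∀ i, 0 ≤ a i := fun i => (ha i).elim (fun h => h.ge) (zero_le_one.trans ·)
  have hterm : ∀ i, 0 ≤ a i * x i := fun i => mul_nonneg (ha0 i) (hx i)
  have hsplit : a k + ∑ i ∈ Finset.univ.erase k, a i * x i = 1 := by
    rw [← h, dotProduct, ← Finset.add_sum_erase _ _ (Finset.mem_univ k), hxk, mul_one]
  have hrest := Finset.sum_nonneg fun i (_ : i ∈ Finset.univ.erase k) => hterm i
  have hak1 : 1 ≤ a k := (ha k).resolve_left hak
  refine ⟨by linarith, fun i hi hxi => ?_⟩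
  have hle := Finset.single_le_sum (fun i _ => hterm i) (Finset.mem_erase.2 ⟨hi, Finset.mem_univ i⟩)
  exact (mul_eq_zero.1 (le_antisymm (by linarith) (hterm i))).resolve_right hxi

/-- The positions `(j, i)` at which the nonnegative solutions of `B x = 1` and `y B = 1` force
equality in the counting argument: `x i = y j = B j i = 1`. -/
noncomputable def tightPairs (B : Matrix J I ℝ) (x : I → ℝ) (y : J → ℝ) : Finset (J × I) :=
  {q | x q.2 = 1 ∧ y q.1 = 1 ∧ B q.1 q.2 = 1}

theorem mem_tightPairs {q : J × I} :
    q ∈ tightPairs B x y ↔ x q.2 = 1 ∧ y q.1 = 1 ∧ B q.1 q.2 = 1 := by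
  simp [tightPairs]

theorem card_tightPairs_transpose : (tightPairs B.transpose y x).card = (tightPairs B x y).card :=
  Finset.card_equiv (Equiv.prodComm I J) fun q => by
    simp only [mem_tightPairs, Matrix.transpose_apply, Equiv.prodComm_apply, Prod.fst_swap,
      Prod.snd_swap]
    tauto

theorem fst_injOn_tightPairs (hB : ∀ j i, B j i = 0 ∨ 1 ≤ B j i) (hx : 0 ≤ x)
    (hBx : B.mulVec x = 1) : Set.InjOn Prod.fst (tightPairs B x y : Set (J × I)) := by
  rintro ⟨j, i⟩ hq ⟨_, i'⟩ hq' rfl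
  obtain ⟨hxi, -, hBji⟩ := mem_tightPairs.1 hq
  obtain ⟨hxi', -, hBji'⟩ := mem_tightPairs.1 hq'
  by_contra hne
  have hzero := (eq_one_of_dotProduct_eq_one (hB j) hx (congrFun hBx j) hxi (by simp_all)).2 i'
    (by grind) (by simp_all)
  simp_all

theorem sum_tightPairs_row_le_one (hB : ∀ j i, B j i = 0 ∨ 1 ≤ B j i) (hx : 0 ≤ x) (hy : 0 ≤ y)
    (hBx : B.mulVec x = 1) (hyB : Matrix.vecMul y B = 1) (i : I) :
    ∑ q : tightPairs B x y, B q.1.1 i ≤ 1 := by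
  classical
  have hB0 : ∀ j i, 0 ≤ B j i := fun j i => (hB j i).elim (fun h => h.ge) (zero_le_one.trans ·)
  calc ∑ q : tightPairs B x y, B q.1.1 i
      = ∑ q ∈ tightPairs B x y, y q.1 * B q.1 i := by
        rw [← Finset.sum_coe_sort _ fun q : J × I => y q.1 * B q.1 i]
        refine Finset.sum_congr rfl fun q _ => ?_
        rw [(mem_tightPairs.1 q.2).2.1, one_mul]
    _ = ∑ j ∈ (tightPairs B x y).image Prod.fst, y j * B j i :=
        (Finset.sum_image (f := fun j => y j * B j i) (fst_injOn_tightPairs hB hx hBx)).symm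
    _ ≤ ∑ j, y j * B j i := Finset.sum_le_univ_sum_of_nonneg fun j => mul_nonneg (hy j) (hB0 j i)
    _ = 1 := congrFun hyB i

theorem mul_diagonal_mul_transpose_apply {Q : Type*} [DecidableEq I] (A R : Matrix Q I ℝ)
    (q t : Q) : (A * (Matrix.diagonal w * R.transpose)) q t = ∑ i, A q i * w i * R t i := by
  rw [← Matrix.mul_assoc, Matrix.mul_apply]
  simp only [Matrix.mul_diagonal, Matrix.transpose_apply]

theorem mul_diagonal_mul_transpose_eq_one {Q : Type*} [Fintype Q] [DecidableEq Q] [DecidableEq I]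
    {R : Matrix Q I ℝ} (hR : ∀ q i, R q i = 0 ∨ 1 ≤ R q i) (hcol : ∀ i, ∑ q, R q i ≤ 1)
    (hRw : R.mulVec w = 1) : R * (Matrix.diagonal w * R.transpose) = 1 := by
  have hR0 : ∀ q i, 0 ≤ R q i := fun q i => (hR q i).elim (fun h => h.ge) (zero_le_one.trans ·)
  ext q t
  rw [mul_diagonal_mul_transpose_apply]
  rcases eq_or_ne q t with rfl | hqt
  · rw [Matrix.one_apply_eq, ← Pi.one_apply (M := fun _ => ℝ) q, ← hRw]
    refine Finset.sum_congr rfl fun i _ => ?_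
    have hle := (Finset.single_le_sum (fun q _ => hR0 q i) (Finset.mem_univ q)).trans (hcol i)
    rcases hR q i with h | h
    · simp [h]
    · simp [le_antisymm hle h]
  · rw [Matrix.one_apply_ne hqt]
    refine Finset.sum_eq_zero fun i _ => ?_
    have hle := (Finset.add_le_sum (fun q _ => hR0 q i) (Finset.mem_univ q) (Finset.mem_univ t)
      hqt).trans (hcol i)
    rcases hR q i with h | h
    · simp [h]
    · rw [(hR t i).resolve_right fun h' => by linarith, mul_zero]

theorem card_le_two_mul_rank_sub {Q : Type*} [Fintype Q] [DecidableEq Q] [DecidableEq I]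
    {A R : Matrix Q I ℝ} (hw : ∀ i, 0 < w i) (hA : ∀ q i, 0 ≤ A q i) (hAw : A.mulVec w = 1)
    (hR : ∀ q i, 0 ≤ R q i) (hcol : ∀ i, ∑ q, R q i ≤ 1)
    (hRR : R * (Matrix.diagonal w * R.transpose) = 1) (hne : ∀ q, ∃ i, A q i ≠ 0 ∧ R q i = 0) :
    Fintype.card Q ≤ 2 * (R - A).rank := by
  let M := A * (Matrix.diagonal w * R.transpose)
  have hMapply : ∀ q t, M q t = ∑ i, A q i * w i * R t i := mul_diagonal_mul_transpose_apply A R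
  have hterm : ∀ q i, 0 ≤ A q i * w i := fun q i => mul_nonneg (hA q i) (hw i).le
  have hsum : ∀ q, ∑ i, A q i * w i = 1 := fun q => congrFun hAw q
  have hRle : ∀ q i, R q i ≤ 1 := fun q i =>
    (Finset.single_le_sum (fun q _ => hR q i) (Finset.mem_univ q)).trans (hcol i)
  have hM : ∀ q t, 0 ≤ M q t := fun q t => by
    rw [hMapply]
    exact Finset.sum_nonneg fun i _ => mul_nonneg (hterm q i) (hR t i)
  have hrow : ∀ q, ∑ t, M q t ≤ 1 := fun q => by
    simp_rw [hMapply]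
    rw [Finset.sum_comm, ← hsum q]
    simp_rw [← Finset.mul_sum]
    exact Finset.sum_le_sum fun i _ => mul_le_of_le_one_right (hterm q i) (hcol i)
  have hdiag : ∀ q, M q q < 1 := fun q => by
    obtain ⟨i, hAi, hRi⟩ := hne q
    rw [hMapply, ← hsum q]
    refine Finset.sum_lt_sum (fun i _ => mul_le_of_le_one_right (hterm q i) (hRle q i))
      ⟨i, Finset.mem_univ i, ?_⟩
    rw [hRi, mul_zero]
    exact mul_pos ((hA q i).lt_of_ne' hAi) (hw i)
  have hfactor : 1 - M = (R - A) * (Matrix.diagonal w * R.transpose) := by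
    rw [Matrix.sub_mul, hRR]
  have hrank := card_le_two_mul_rank_one_sub hM hrow hdiag
  rw [hfactor] at hrank
  exact hrank.trans (Nat.mul_le_mul_left 2 (Matrix.rank_mul_le_left _ _))

theorem two_mul_card_support_add_card_tightPairs_le (hB : ∀ j i, B j i = 0 ∨ 1 ≤ B j i)
    (hw : ∀ i, 0 < w i) (hBw : B.mulVec w = 1) (hx : 0 ≤ x) (hy : 0 ≤ y) (hBx : B.mulVec x = 1)
    (hyB : Matrix.vecMul y B = 1) (hindep : LinearIndepOn ℝ B.col (Function.support x))
    (hne : ∀ q : tightPairs B x y, ∃ j, B j q.1.2 ≠ 0 ∧ ∃ i, B j i ≠ 0 ∧ B q.1.1 i = 0) :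
    2 * (Finset.univ.filter (x · ≠ 0)).card + (tightPairs B x y).card ≤ 2 * B.rank := by
  classical
  -- The row through a tight pair and any other row not vanishing there agree on the support of `x`,
  -- so their difference vanishes on `supp x` independent columns and adds to the rank.
  choose other hother hrow using hne
  let R := B.submatrix (fun q : tightPairs B x y => q.1.1) id
  let A := B.submatrix (fun q : tightPairs B x y => other q) id
  let E : Matrix (tightPairs B x y) J ℝ :=
    (1 : Matrix J J ℝ).submatrix (fun q => q.1.1) id -
      (1 : Matrix J J ℝ).submatrix (fun q => other q) id
  have hE : E * B = R - A := by
    ext q i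
    simp [E, R, A, sub_mul, Matrix.mul_apply, Matrix.one_apply]
  have hcol : ∀ i, ∑ q, R q i ≤ 1 := sum_tightPairs_row_le_one hB hx hy hBx hyB
  have hRR : R * (Matrix.diagonal w * R.transpose) = 1 :=
    mul_diagonal_mul_transpose_eq_one (fun q => hB q.1.1) hcol (funext fun q => congrFun hBw q.1.1)
  have hB0 : ∀ j i, 0 ≤ B j i := fun j i => (hB j i).elim (fun h => h.ge) (zero_le_one.trans ·)
  have hcard := card_le_two_mul_rank_sub hw (fun q => hB0 (other q))
    (funext fun q : tightPairs B x y => congrFun hBw (other q)) (fun q => hB0 q.1.1) hcol hRR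
    hrow
  have hzero : ∀ i ∈ Finset.univ.filter (x · ≠ 0), ∀ q, (E * B) q i = 0 := fun i hi q => by
    obtain ⟨hxq, -, hBq⟩ := mem_tightPairs.1 q.2
    have hrow₁ := eq_one_of_dotProduct_eq_one (hB q.1.1) hx (congrFun hBx q.1.1) hxq
      (hBq ▸ one_ne_zero)
    have hrow₂ := eq_one_of_dotProduct_eq_one (hB (other q)) hx (congrFun hBx (other q)) hxq
      (hother q)
    have hxi : x i ≠ 0 := (Finset.mem_filter.1 hi).2
    rw [hE, Matrix.sub_apply, sub_eq_zero]
    rcases eq_or_ne i q.1.2 with rfl | hiq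
    · exact hrow₁.1.trans hrow₂.1.symm
    · exact (hrow₁.2 i hiq hxi).trans (hrow₂.2 i hiq hxi).symm
  have hrank := card_add_rank_mul_le (E := E) (by simpa [Function.support] using hindep) hzero
  rw [hE] at hrank
  rw [Fintype.card_coe] at hcard
  change _ ≤ 2 * (R - A).rank at hcard
  omega

theorem sum_eq_sum_of_mulVec_eq_one (hBx : B.mulVec x = 1) (hyB : Matrix.vecMul y B = 1) :
    ∑ i, x i = ∑ j, y j := by
  have h := Matrix.dotProduct_mulVec y B x
  rwa [hBx, hyB, dotProduct_one, one_dotProduct, eq_comm] at h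

theorem two_le_sum_or_eq_one {a : I → ℝ} (ha : ∀ i, ∃ n : ℕ, a i = n) (h : a ⬝ᵥ x = 1) {k : I}
    (hxk : x k ≠ 0) (hak : a k ≠ 0) :
    1 ≤ ∑ i with x i ≠ 0, a i ∧ (2 ≤ ∑ i with x i ≠ 0, a i ∨ a k = 1 ∧ x k = 1) := by
  have ha0 : ∀ i, 0 ≤ a i := fun i => by
    obtain ⟨n, hn⟩ := ha i
    exact hn ▸ n.cast_nonneg
  have ha1 : ∀ i, a i ≠ 0 → 1 ≤ a i := fun i hi => by
    obtain ⟨n, hn⟩ := ha i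
    rw [hn] at hi ⊢
    exact_mod_cast Nat.one_le_iff_ne_zero.2 (by exact_mod_cast hi)
  have hk : k ∈ Finset.univ.filter (x · ≠ 0) := by simpa using hxk
  have hle : a k ≤ ∑ i with x i ≠ 0, a i := Finset.single_le_sum (fun i _ => ha0 i) hk
  refine ⟨(ha1 k hak).trans hle, or_iff_not_imp_left.2 fun hlt => ?_⟩
  have hone : a k = 1 := by
    obtain ⟨n, hn⟩ := ha k
    rw [hn] at hak hle ⊢
    have : (n : ℝ) < 2 := by linarith
    norm_cast at this hak ⊢
    omega
  have hrest : ∀ i, i ≠ k → a i * x i = 0 := fun i hi => by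
    by_contra hne
    obtain ⟨hai, hxi⟩ := mul_ne_zero_iff.1 hne
    have := Finset.add_le_sum (fun i _ => ha0 i) hk (Finset.mem_filter.2 ⟨Finset.mem_univ i, hxi⟩)
      hi.symm
    linarith [ha1 i hai]
  rw [dotProduct, Fintype.sum_eq_single k hrest, hone, one_mul] at h
  exact ⟨hone, h⟩

theorem sum_mul_sum_support_eq_card (hyB : Matrix.vecMul y B = 1) :
    ∑ j, y j * ∑ i with x i ≠ 0, B j i = (Finset.univ.filter (x · ≠ 0)).card := by
  simp_rw [Finset.mul_sum]
  rw [Finset.sum_comm, Finset.card_eq_sum_ones, Nat.cast_sum, Nat.cast_one]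
  exact Finset.sum_congr rfl fun i _ => congrFun hyB i

theorem three_mul_weight_le [DecidableEq I] [DecidableEq J] (hB : ∀ j i, ∃ n : ℕ, B j i = n)
    (hx : 0 ≤ x) (hy : 0 ≤ y) (hBx : B.mulVec x = 1) (hyB : Matrix.vecMul y B = 1) (j : J)
    (i : I) :
    3 * (y j * B j i * x i) ≤ y j * B j i * x i * ∑ i' with x i' ≠ 0, B j i' +
      y j * B j i * x i * ∑ j' with y j' ≠ 0, B j' i +
      if (j, i) ∈ tightPairs B x y then 1 else 0 := by
  rcases eq_or_ne (y j * B j i * x i) 0 with hzero | hne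
  · rw [hzero]
    split_ifs <;> simp
  obtain ⟨⟨hyj, hBji⟩, hxi⟩ : (y j ≠ 0 ∧ B j i ≠ 0) ∧ x i ≠ 0 := by
    simpa only [mul_ne_zero_iff] using hne
  obtain ⟨hrow₁, hrow₂⟩ := two_le_sum_or_eq_one (hB j) (congrFun hBx j) hxi hBji
  obtain ⟨hcol₁, hcol₂⟩ := two_le_sum_or_eq_one (fun j => hB j i)
    ((dotProduct_comm _ _).trans (congrFun hyB i)) hyj hBji
  by_cases htight : (j, i) ∈ tightPairs B x y
  · obtain ⟨hxi₁, hyj₁, hBji₁⟩ := mem_tightPairs.1 htight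
    rw [if_pos htight, hxi₁, hyj₁, hBji₁]
    linarith
  · have hthree : 3 ≤ ∑ i' with x i' ≠ 0, B j i' + ∑ j' with y j' ≠ 0, B j' i := by
      rcases hrow₂ with hr | hr
      · linarith
      rcases hcol₂ with hc | hc
      · linarith
      · exact absurd (mem_tightPairs.2 ⟨hr.2, hc.2, hr.1⟩) htight
    have hweight : 0 ≤ y j * B j i * x i := by
      obtain ⟨n, hn⟩ := hB j i
      exact mul_nonneg (mul_nonneg (hy j) (hn ▸ n.cast_nonneg)) (hx i)
    rw [if_neg htight, add_zero, ← mul_add, mul_comm]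
    exact mul_le_mul_of_nonneg_left hthree hweight

theorem three_mul_sum_le_card_support_add_card_tightPairs (hB : ∀ j i, ∃ n : ℕ, B j i = n)
    (hx : 0 ≤ x) (hy : 0 ≤ y) (hBx : B.mulVec x = 1) (hyB : Matrix.vecMul y B = 1) :
    3 * ∑ i, x i ≤ (Finset.univ.filter (x · ≠ 0)).card + (Finset.univ.filter (y · ≠ 0)).card +
      (tightPairs B x y).card := by
  classical
  have hsum_row : ∀ j, ∑ i, y j * B j i * x i = y j := fun j => by
    simp only [mul_assoc, ← Finset.mul_sum]
    rw [show ∑ i, B j i * x i = 1 from congrFun hBx j, mul_one]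
  have hsum_col : ∀ i, ∑ j, y j * B j i * x i = x i := fun i => by
    simp only [← Finset.sum_mul]
    rw [show ∑ j, y j * B j i = 1 from congrFun hyB i, one_mul]
  have hrow : ∑ j, ∑ i, y j * B j i * x i * ∑ i' with x i' ≠ 0, B j i' =
      (Finset.univ.filter (x · ≠ 0)).card := by
    simp only [← Finset.sum_mul, hsum_row]
    exact sum_mul_sum_support_eq_card hyB
  have hcol : ∑ j, ∑ i, y j * B j i * x i * ∑ j' with y j' ≠ 0, B j' i =
      (Finset.univ.filter (y · ≠ 0)).card := by
    rw [Finset.sum_comm]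
    simp only [← Finset.sum_mul, hsum_col]
    exact sum_mul_sum_support_eq_card (B := B.transpose) (by rwa [Matrix.vecMul_transpose])
  have htight : ∑ j, ∑ i, (if (j, i) ∈ tightPairs B x y then (1 : ℝ) else 0) =
      (tightPairs B x y).card := by
    rw [← Fintype.sum_prod_type']
    simp
  calc 3 * ∑ i, x i = ∑ j, ∑ i, 3 * (y j * B j i * x i) := by
        rw [Finset.sum_comm]
        simp only [← Finset.mul_sum, hsum_col]
    _ ≤ _ := Finset.sum_le_sum fun j _ => Finset.sum_le_sum fun i _ =>
        three_mul_weight_le hB hx hy hBx hyB j i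
    _ = _ := by simp only [Finset.sum_add_distrib, hrow, hcol, htight]

end TightPairs

section RatioTest

variable {I : Type*} [Finite I]

theorem exists_pos_support_sub_smul_ssubset {f g : I → ℝ} (hf : 0 ≤ f)
    (hsupp : Function.support g ⊆ Function.support f) (hpos : ∃ i, 0 < g i) :
    ∃ t : ℝ, 0 < t ∧ 0 ≤ f - t • g ∧ Function.support (f - t • g) ⊂ Function.support f := by
  obtain ⟨k, hk : 0 < g k, hmin⟩ :=
    Set.exists_min_image {i | 0 < g i} (fun i => f i / g i) (Set.toFinite _) hpos
  have hfk : f k ≠ 0 := hsupp hk.ne'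
  have ht : 0 < f k / g k := div_pos ((hf k).lt_of_ne' hfk) hk
  refine ⟨f k / g k, ht, fun i => ?_, fun i hi => ?_, fun hsub => hsub hfk ?_⟩
  · rcases lt_or_ge 0 (g i) with hi | hi
    · simpa using (le_div_iff₀ hi).1 (hmin i hi)
    · simpa using (mul_nonpos_of_nonneg_of_nonpos ht.le hi).trans (hf i)
  · by_contra hfi
    have hgi : g i = 0 := by_contra fun h => hfi (hsupp h)
    exact hi (by simp [hgi, Function.notMem_support.1 hfi])
  · simp [div_mul_cancel₀ _ hk.ne']

theorem exists_nonneg_mulVec_eq_linearIndepOn [Fintype I] {J : Type*} {B : Matrix J I ℝ}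
    {b : J → ℝ} {w : I → ℝ} (hw : 0 ≤ w) (hBw : B.mulVec w = b) :
    ∃ x, 0 ≤ x ∧ B.mulVec x = b ∧ LinearIndepOn ℝ B.col (Function.support x) := by
  obtain ⟨x, ⟨hx, hBx⟩, hmin⟩ := exists_minimalFor_of_wellFoundedLT
    (fun x : I → ℝ => 0 ≤ x ∧ B.mulVec x = b) Function.support ⟨w, hw, hBw⟩
  have hkernel : ∀ g, B.mulVec g = 0 → Function.support g ⊆ Function.support x → g ≤ 0 := by
    intro g hBg hsupp
    by_contra hpos
    obtain ⟨t, -, hnonneg, hssub⟩ := exists_pos_support_sub_smul_ssubset hx hsupp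
      (by simpa [Pi.le_def] using hpos)
    refine hssub.not_subset (hmin ⟨hnonneg, ?_⟩ hssub.subset)
    rw [Matrix.mulVec_sub, Matrix.mulVec_smul, hBg, smul_zero, sub_zero, hBx]
  refine ⟨x, hx, hBx, linearIndepOn_iff.2 fun g hsupp hg => ?_⟩
  have hsupp' : Function.support g ⊆ Function.support x := by
    simpa [Finsupp.mem_supported] using hsupp
  have hBg : B.mulVec g = 0 := by
    rw [← hg, Finsupp.linearCombination_apply, Finsupp.sum_fintype _ _ (by simp)]
    ext j
    simp [Matrix.mulVec, dotProduct, mul_comm]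
  refine DFunLike.coe_injective (le_antisymm (hkernel g hBg hsupp') (neg_nonpos.1 ?_))
  exact hkernel (-g) (by rw [Matrix.mulVec_neg, hBg, neg_zero]) (by rwa [Function.support_neg])

end RatioTest

theorem exists_tightPair_exchange {I J : Type*} [Fintype I] [Fintype J] {B : Matrix J I ℝ}
    {x : I → ℝ} {y : J → ℝ} (hrows : ∀ j j', j ≠ j' → ∃ i, B j i ≠ 0 ∧ B j' i = 0)
    (hcols : ∀ i i', i ≠ i' → ∃ j, B j i ≠ 0 ∧ B j i' = 0)
    (hunit : ∀ j i, B j i = 1 → ∃ i', i' ≠ i ∧ B j i' ≠ 0) (q : tightPairs B x y) :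
    (∃ j, B j q.1.2 ≠ 0 ∧ ∃ i, B j i ≠ 0 ∧ B q.1.1 i = 0) ∧
      ∃ i, B q.1.1 i ≠ 0 ∧ ∃ j, B j i ≠ 0 ∧ B j q.1.2 = 0 := by
  obtain ⟨i', hne, hi'⟩ := hunit q.1.1 q.1.2 (mem_tightPairs.1 q.2).2.2
  obtain ⟨j, hj, hji'⟩ := hcols _ _ hne.symm
  exact ⟨⟨j, hj, hrows _ _ fun h => hi' (h ▸ hji')⟩, i', hi', hcols _ _ hne⟩

theorem three_mul_sum_le_two_mul_rank {I J : Type*} [Fintype I] [Fintype J] {B : Matrix J I ℝ}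
    {w : I → ℝ} {z : J → ℝ} (hB : ∀ j i, ∃ n : ℕ, B j i = n) (hw : ∀ i, 0 < w i)
    (hz : ∀ j, 0 < z j) (hBw : B.mulVec w = 1) (hzB : Matrix.vecMul z B = 1)
    (hrows : ∀ j j', j ≠ j' → ∃ i, B j i ≠ 0 ∧ B j' i = 0)
    (hcols : ∀ i i', i ≠ i' → ∃ j, B j i ≠ 0 ∧ B j i' = 0)
    (hunit : ∀ j i, B j i = 1 → ∃ i', i' ≠ i ∧ B j i' ≠ 0) :
    3 * ∑ i, w i ≤ 2 * B.rank := by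
  have hB' : ∀ j i, B j i = 0 ∨ 1 ≤ B j i := fun j i => by
    obtain ⟨n, hn⟩ := hB j i
    rw [hn]
    exact_mod_cast n.eq_zero_or_pos
  have hzB' : B.transpose.mulVec z = 1 := by rwa [Matrix.mulVec_transpose]
  obtain ⟨x, hx, hBx, hxindep⟩ :=
    exists_nonneg_mulVec_eq_linearIndepOn (fun i => (hw i).le) hBw
  obtain ⟨y, hy, hyB', hyindep⟩ :=
    exists_nonneg_mulVec_eq_linearIndepOn (fun j => (hz j).le) hzB'
  have hyB : Matrix.vecMul y B = 1 := by rwa [← Matrix.mulVec_transpose]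
  have hexchange := exists_tightPair_exchange (x := x) (y := y) hrows hcols hunit
  have hrank := two_mul_card_support_add_card_tightPairs_le hB' hw hBw hx hy hBx hyB hxindep
    fun q => (hexchange q).1
  have hrank' := two_mul_card_support_add_card_tightPairs_le (B := B.transpose)
    (fun i j => hB' j i) hz hzB' hy hx hyB' (by rwa [Matrix.vecMul_transpose]) hyindep fun q =>
      (hexchange ⟨q.1.swap, mem_tightPairs.2 (by
        obtain ⟨h₁, h₂, h₃⟩ := mem_tightPairs.1 q.2
        exact ⟨h₂, h₁, h₃⟩)⟩).2
  rw [card_tightPairs_transpose, Matrix.rank_transpose] at hrank'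
  have hcount := three_mul_sum_le_card_support_add_card_tightPairs hB hx hy hBx hyB
  rw [sum_eq_sum_of_mulVec_eq_one hBx hyB, ← sum_eq_sum_of_mulVec_eq_one hBw hyB] at hcount
  have hsupport : (Finset.univ.filter (x · ≠ 0)).card + (Finset.univ.filter (y · ≠ 0)).card +
      (tightPairs B x y).card ≤ 2 * B.rank := by omega
  exact hcount.trans (by exact_mod_cast hsupport)

section ExtremalVectors

variable {V : Type*} {L : Submodule ℝ (V → ℝ)} {f g : V → ℝ}

/-- `f` spans an extremal ray of the cone of nonnegative vectors of `L`, encoded as minimality of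
its support among the nonzero nonnegative vectors of `L`. -/
def IsExtremal (L : Submodule ℝ (V → ℝ)) (f : V → ℝ) : Prop :=
  MinimalFor (fun g => g ∈ L ∧ 0 ≤ g ∧ g ≠ 0) Function.support f

theorem IsExtremal.smul (hf : IsExtremal L f) {t : ℝ} (ht : 0 < t) : IsExtremal L (t • f) := by
  refine ⟨⟨L.smul_mem t hf.1.1, smul_nonneg ht.le hf.1.2.1, smul_ne_zero ht.ne' hf.1.2.2⟩,
    fun g hg hgf => ?_⟩
  rw [Function.support_const_smul_of_ne_zero t f ht.ne'] at hgf ⊢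
  exact hf.2 hg hgf

theorem exists_pos_of_nonneg_of_ne_zero (hf : 0 ≤ f) (hne : f ≠ 0) : ∃ v, 0 < f v := by
  obtain ⟨v, hv⟩ := Function.ne_iff.1 hne
  exact ⟨v, (hf v).lt_of_ne' hv⟩

theorem exists_isExtremal_support_subset [Finite V] (hfL : f ∈ L) (hf : 0 ≤ f) (hne : f ≠ 0) :
    ∃ g, IsExtremal L g ∧ Function.support g ⊆ Function.support f := by
  obtain ⟨g, ⟨hg, hgf⟩, hmin⟩ := exists_minimalFor_of_wellFoundedLT
    (fun g => (g ∈ L ∧ 0 ≤ g ∧ g ≠ 0) ∧ Function.support g ⊆ Function.support f)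
    Function.support ⟨f, ⟨hfL, hf, hne⟩, subset_rfl⟩
  exact ⟨g, ⟨hg, fun h hh hhg => hmin ⟨hh, hhg.trans hgf⟩ hhg⟩, hgf⟩

theorem IsExtremal.exists_eq_smul [Finite V] (hf : IsExtremal L f) (hg : g ∈ L)
    (hsupp : Function.support g ⊆ Function.support f) : ∃ t : ℝ, g = t • f := by
  have hmul : ∀ h ∈ L, Function.support h ⊆ Function.support f → (∃ v, 0 < h v) →
      ∃ t : ℝ, h = t • f := by
    intro h hh hhf hpos
    obtain ⟨t, ht, hnonneg, hssub⟩ := exists_pos_support_sub_smul_ssubset hf.1.2.1 hhf hpos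
    have hzero : f - t • h = 0 := by
      by_contra hne
      exact hssub.not_subset (hf.2 ⟨L.sub_mem hf.1.1 (L.smul_mem t hh), hnonneg, hne⟩ hssub.subset)
    exact ⟨t⁻¹, by rw [sub_eq_zero.1 hzero, inv_smul_smul₀ ht.ne']⟩
  by_cases hpos : ∃ v, 0 < g v
  · exact hmul g hg hsupp hpos
  have hneg : 0 ≤ -g := fun v => neg_nonneg.2 (not_lt.1 fun h => hpos ⟨v, h⟩)
  rcases eq_or_ne g 0 with rfl | hne
  · exact ⟨0, (zero_smul ℝ f).symm⟩
  obtain ⟨t, ht⟩ := hmul (-g) (L.neg_mem hg) (by rwa [Function.support_neg])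
    (exists_pos_of_nonneg_of_ne_zero hneg (neg_ne_zero.2 hne))
  exact ⟨-t, by rw [neg_smul, ← ht, neg_neg]⟩

theorem IsExtremal.exists_eq_zero [Finite V] [Nontrivial V] (hf : IsExtremal L f)
    (hL : ∀ u v, u ≠ v → ∃ g ∈ L, g u = 0 ∧ g v ≠ 0) : ∃ v, f v = 0 := by
  by_contra! hne
  obtain ⟨u, v, huv⟩ := exists_pair_ne V
  obtain ⟨g, hg, hgu, hgv⟩ := hL u v huv
  obtain ⟨t, rfl⟩ := hf.exists_eq_smul hg fun v _ => hne v
  have ht : t = 0 := (mul_eq_zero.1 hgu).resolve_right (hne u)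
  exact hgv (by simp [ht])

variable [Fintype V] {w : V → ℝ}

/-- The representatives `f` of the extremal rays of `L` normalized by `f ⬝ᵥ w = 1`. -/
def normalizedExtremals (L : Submodule ℝ (V → ℝ)) (w : V → ℝ) : Set (V → ℝ) :=
  {f | IsExtremal L f ∧ f ⬝ᵥ w = 1}

theorem eq_of_mem_normalizedExtremals (hf : f ∈ normalizedExtremals L w)
    (hg : g ∈ normalizedExtremals L w) (hsupp : Function.support g ⊆ Function.support f) :
    g = f := by
  obtain ⟨t, rfl⟩ := hf.1.exists_eq_smul hg.1.1.1 hsupp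
  have ht := hg.2
  rw [smul_dotProduct, hf.2, smul_eq_mul, mul_one] at ht
  rw [ht, one_smul]

instance : Finite (normalizedExtremals L w) :=
  Finite.of_injective (fun f => Function.support f.1) fun f g h =>
    Subtype.ext (eq_of_mem_normalizedExtremals g.2 f.2 h.subset)

theorem IsExtremal.exists_pos_smul_mem_normalizedExtremals (hw : ∀ v, 0 < w v)
    (hf : IsExtremal L f) : ∃ t : ℝ, 0 < t ∧ t • f ∈ normalizedExtremals L w := by
  obtain ⟨v, hv⟩ := exists_pos_of_nonneg_of_ne_zero hf.1.2.1 hf.1.2.2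
  have hpos : 0 < f ⬝ᵥ w := Finset.sum_pos' (fun u _ => mul_nonneg (hf.1.2.1 u) (hw u).le)
    ⟨v, Finset.mem_univ v, mul_pos hv (hw v)⟩
  refine ⟨(f ⬝ᵥ w)⁻¹, inv_pos.2 hpos, hf.smul (inv_pos.2 hpos), ?_⟩
  rw [smul_dotProduct, smul_eq_mul, inv_mul_cancel₀ hpos.ne']

theorem mem_span_normalizedExtremals (hw : ∀ v, 0 < w v) (hfL : f ∈ L) (hf : 0 ≤ f) :
    f ∈ Submodule.span NNReal (normalizedExtremals L w) := by
  induction hs : Function.support f using WellFoundedLT.induction generalizing f with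
  | ind s ih =>
    rcases eq_or_ne f 0 with rfl | hne
    · exact Submodule.zero_mem _
    obtain ⟨g, hg, hgf⟩ := exists_isExtremal_support_subset hfL hf hne
    obtain ⟨c, hc, hcg⟩ := hg.exists_pos_smul_mem_normalizedExtremals hw
    have hcg' := hcg.1.1
    obtain ⟨t, ht, hnonneg, hssub⟩ := exists_pos_support_sub_smul_ssubset hf
      (by rwa [Function.support_const_smul_of_ne_zero c g hc.ne'])
      (exists_pos_of_nonneg_of_ne_zero hcg'.2.1 hcg'.2.2)
    rw [← sub_add_cancel f (t • c • g)]
    exact add_mem (ih _ (hs ▸ hssub) (L.sub_mem hfL (L.smul_mem t hcg'.1)) hnonneg rfl)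
      (Submodule.smul_mem _ (⟨t, ht.le⟩ : NNReal) (Submodule.subset_span hcg))

/-- The matrix whose rows are the normalized extremals; for the facet functionals of a polytope
restricted to its vertices this is the facet–vertex incidence matrix of lattice distances. -/
def extremalMatrix (L : Submodule ℝ (V → ℝ)) (w : V → ℝ) : Matrix (normalizedExtremals L w) V ℝ :=
  Matrix.of Subtype.val

theorem rank_extremalMatrix_le : (extremalMatrix L w).rank ≤ Module.finrank ℝ L := by
  rw [Matrix.rank_eq_finrank_span_row]
  refine Submodule.finrank_mono (Submodule.span_le.2 ?_)
  rintro _ ⟨j, rfl⟩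
  exact j.2.1.1.1

theorem exists_nonneg_vecMul_extremalMatrix_eq [Fintype (normalizedExtremals L w)]
    (hw : ∀ v, 0 < w v) (hfL : f ∈ L) (hf : 0 ≤ f) :
    ∃ c, 0 ≤ c ∧ Matrix.vecMul c (extremalMatrix L w) = f := by
  have hmem := mem_span_normalizedExtremals hw hfL hf
  rw [← Subtype.range_coe (s := normalizedExtremals L w),
    Submodule.mem_span_range_iff_exists_fun] at hmem
  obtain ⟨c, hc⟩ := hmem
  refine ⟨fun j => c j, fun j => (c j).2, ?_⟩
  rw [← hc]
  ext v
  simp [Matrix.vecMul, dotProduct, extremalMatrix, NNReal.smul_def]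

theorem exists_pos_vecMul_extremalMatrix_eq_one [Fintype (normalizedExtremals L w)]
    (hw : ∀ v, 0 < w v) (hone : 1 ∈ L) :
    ∃ z, (∀ j, 0 < z j) ∧ Matrix.vecMul z (extremalMatrix L w) = 1 := by
  let B := extremalMatrix L w
  have hB : ∀ j v, 0 ≤ B j v := fun j v => j.2.1.1.2.1 v
  -- `1` is a small positive combination of all rows plus a nonnegative vector of `L`.
  let total := ∑ v, ∑ j, B j v + 1
  have hnonneg : 0 ≤ ∑ v, ∑ j, B j v :=
    Finset.sum_nonneg fun v _ => Finset.sum_nonneg fun j _ => hB j v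
  have htotal : 0 < total := by positivity
  have hsmall : 0 ≤ 1 - total⁻¹ • Matrix.vecMul 1 B := fun v => by
    have hv : ∑ j, B j v ≤ total := (Finset.single_le_sum
      (fun v _ => Finset.sum_nonneg fun j _ => hB j v) (Finset.mem_univ v)).trans
      (le_add_of_nonneg_right zero_le_one)
    simpa [Matrix.vecMul, dotProduct, inv_mul_le_iff₀ htotal] using hv
  have hL : Matrix.vecMul 1 B ∈ L := by
    rw [Matrix.vecMul_eq_sum]
    exact L.sum_mem fun j _ => L.smul_mem _ j.2.1.1.1
  obtain ⟨c, hc, hcB⟩ := exists_nonneg_vecMul_extremalMatrix_eq hw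
    (L.sub_mem hone (L.smul_mem total⁻¹ hL)) hsmall
  refine ⟨c + total⁻¹ • 1, fun j => ?_, ?_⟩
  · simpa using add_pos_of_nonneg_of_pos (hc j) (inv_pos.2 htotal)
  · rw [Matrix.add_vecMul, hcB, Matrix.smul_vecMul, sub_add_cancel]

theorem exists_extremalMatrix_ne_zero_and_eq_zero (hw : ∀ v, 0 < w v) (hf : 0 ≤ f) (hfL : f ∈ L)
    {u v : V} (hu : f u ≠ 0) (hv : f v = 0) :
    ∃ j, extremalMatrix L w j u ≠ 0 ∧ extremalMatrix L w j v = 0 := by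
  have := Fintype.ofFinite (normalizedExtremals L w)
  obtain ⟨c, hc, rfl⟩ := exists_nonneg_vecMul_extremalMatrix_eq hw hfL hf
  obtain ⟨j, -, hj⟩ := Finset.exists_ne_zero_of_sum_ne_zero hu
  have hzero := (Finset.sum_eq_zero_iff_of_nonneg fun j _ =>
    mul_nonneg (hc j) (j.2.1.1.2.1 v)).1 hv j (Finset.mem_univ j)
  exact ⟨j, right_ne_zero_of_mul hj, (mul_eq_zero.1 hzero).resolve_left (left_ne_zero_of_mul hj)⟩

theorem exists_single_mem_normalizedExtremals [DecidableEq V] (hw : ∀ v, 0 < w v) (hone : 1 ∈ L)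
    (hsep : ∀ v, ∃ g ∈ L, g v = 0 ∧ ∀ u, u ≠ v → 0 < g u)
    (hnat : ∀ f ∈ normalizedExtremals L w, ∀ v, ∃ n : ℕ, f v = n)
    (hrank : 2 * (Module.finrank ℝ L : ℝ) < 3 * ∑ v, w v) :
    ∃ v, Pi.single v 1 ∈ normalizedExtremals L w := by
  have := Fintype.ofFinite (normalizedExtremals L w)
  obtain ⟨z, hz, hzB⟩ := exists_pos_vecMul_extremalMatrix_eq_one hw hone
  have hrows : ∀ j j', j ≠ j' → ∃ v, extremalMatrix L w j v ≠ 0 ∧ extremalMatrix L w j' v = 0 := by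
    intro j j' hne
    by_contra! hsupp
    exact hne (Subtype.ext (eq_of_mem_normalizedExtremals j'.2 j.2 hsupp))
  have hcols : ∀ u v, u ≠ v → ∃ j, extremalMatrix L w j u ≠ 0 ∧ extremalMatrix L w j v = 0 := by
    intro u v huv
    obtain ⟨g, hg, hgv, hgpos⟩ := hsep v
    have hnonneg : 0 ≤ g := fun t => by
      rcases eq_or_ne t v with rfl | ht
      exacts [hgv.ge, (hgpos t ht).le]
    exact exists_extremalMatrix_ne_zero_and_eq_zero hw hnonneg hg (hgpos u huv).ne' hgv
  by_contra! hsingle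
  have hunit : ∀ j v, extremalMatrix L w j v = 1 → ∃ u, u ≠ v ∧ extremalMatrix L w j u ≠ 0 := by
    intro j v hjv
    by_contra! hzero
    have hj : j.1 = Pi.single v 1 := funext fun u => by
      rcases eq_or_ne u v with rfl | hu
      · simpa [extremalMatrix] using hjv
      · simpa [extremalMatrix, hu] using hzero u hu
    exact hsingle v (hj ▸ j.2)
  have hle := three_mul_sum_le_two_mul_rank (B := extremalMatrix L w) (fun j v => hnat j j.2 v) hw
    hz (funext fun j => j.2.2) hzB hrows hcols hunit
  have hrank_le : ((extremalMatrix L w).rank : ℝ) ≤ Module.finrank ℝ L := by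
    exact_mod_cast rank_extremalMatrix_le
  linarith

end ExtremalVectors

section ConvexHull

theorem mem_convexHull_range_iff_exists_stdSimplex {ι E : Type*} [Fintype ι] [AddCommGroup E]
    [Module ℝ E] {p : ι → E} {y : E} :
    y ∈ convexHull ℝ (Set.range p) ↔ ∃ c ∈ stdSimplex ℝ ι, ∑ i, c i • p i = y := by
  classical
  have himage : Set.range p =
      Fintype.linearCombination ℝ p '' Set.range fun i : ι => Pi.single i (1 : ℝ) := by
    rw [← Set.range_comp]
    simp [Function.comp_def]
  rw [himage, ← LinearMap.image_convexHull, convexHull_rangle_single_eq_stdSimplex]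
  simp [Fintype.linearCombination_apply]

theorem apply_eq_zero_iff_mem_convexHull_zeros {ι E : Type*} [Finite ι] [AddCommGroup E]
    [Module ℝ E] {p : ι → E} {a : E →ᵃ[ℝ] ℝ} (ha : ∀ i, 0 ≤ a (p i)) {y : E}
    (hy : y ∈ convexHull ℝ (Set.range p)) :
    a y = 0 ↔ y ∈ convexHull ℝ (p '' {i | a (p i) = 0}) := by
  have := Fintype.ofFinite ι
  refine ⟨fun hay => ?_, fun hy' => ?_⟩
  · obtain ⟨c, ⟨hc, hc1⟩, rfl⟩ := mem_convexHull_range_iff_exists_stdSimplex.1 hy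
    have hsum : a (∑ i, c i • p i) = ∑ i, c i * a (p i) := by
      rw [AffineMap.decomp a]
      simp [mul_add, Finset.sum_add_distrib, ← Finset.sum_mul, hc1]
    rw [hsum, Finset.sum_eq_zero_iff_of_nonneg fun i _ => mul_nonneg (hc i) (ha i)] at hay
    rw [← finsum_eq_sum_of_fintype]
    refine (convex_convexHull ℝ _).finsum_mem hc (by rwa [finsum_eq_sum_of_fintype]) fun i hi =>
      subset_convexHull ℝ _ ⟨i, ?_, rfl⟩
    exact (mul_eq_zero.1 (hay i (Finset.mem_univ i))).resolve_left hi
  · exact convexHull_min (Set.image_subset_iff.2 fun i hi => hi)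
      ((convex_singleton (0 : ℝ)).affine_preimage a) hy'

theorem exists_pos_add_smul_sub_mem {E : Type*} [NormedAddCommGroup E] [NormedSpace ℝ E]
    {Q : Set E} {x c : E} (hx : x ∈ intrinsicInterior ℝ Q) (hc : c ∈ Q) :
    ∃ ε : ℝ, 0 < ε ∧ x + ε • (x - c) ∈ Q := by
  obtain ⟨x, hx, rfl⟩ := mem_intrinsicInterior.1 hx
  have hmem : ∀ ε : ℝ, AffineMap.lineMap (x : E) c (-ε) ∈ affineSpan ℝ Q := fun ε =>
    AffineMap.lineMap_mem _ x.2 (subset_affineSpan ℝ Q hc)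
  let line : ℝ → affineSpan ℝ Q := fun ε => ⟨_, hmem ε⟩
  have hcont : Continuous line :=
    (AffineMap.lineMap_continuous.comp continuous_neg).subtype_mk _
  have hzero : line 0 ∈ interior ((↑) ⁻¹' Q : Set (affineSpan ℝ Q)) := by
    have hline : line 0 = x :=
      Subtype.ext (by simp only [line, neg_zero, AffineMap.lineMap_apply_zero])
    rwa [hline]
  obtain ⟨ε, hε, hline⟩ := ((isOpen_interior.preimage hcont).eventually_mem hzero).exists_gt
  refine ⟨ε, hε, ?_⟩
  have heq : AffineMap.lineMap (x : E) c (-ε) = x + ε • (x - c) := by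
    rw [AffineMap.lineMap_apply_module']
    module
  exact heq ▸ interior_subset (s := ((↑) ⁻¹' Q : Set (affineSpan ℝ Q))) hline

theorem exists_pos_sum_smul_eq_of_mem_intrinsicInterior {ι E : Type*} [Fintype ι] [Nonempty ι]
    [NormedAddCommGroup E] [NormedSpace ℝ E] {p : ι → E} {x : E}
    (hx : x ∈ intrinsicInterior ℝ (convexHull ℝ (Set.range p))) :
    ∃ c : ι → ℝ, (∀ i, 0 < c i) ∧ ∑ i, c i = 1 ∧ ∑ i, c i • p i = x := by
  let u : ι → ℝ := fun _ => (Fintype.card ι : ℝ)⁻¹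
  have hu : u ∈ stdSimplex ℝ ι := ⟨fun _ => by positivity, by simp [u]⟩
  obtain ⟨ε, hε, hmem⟩ := exists_pos_add_smul_sub_mem hx
    (mem_convexHull_range_iff_exists_stdSimplex.2 ⟨u, hu, rfl⟩)
  obtain ⟨c, ⟨hc, hc1⟩, hcp⟩ := mem_convexHull_range_iff_exists_stdSimplex.1 hmem
  refine ⟨(1 + ε)⁻¹ • (c + ε • u), fun i => ?_, ?_, ?_⟩
  · have hui : 0 < u i := by positivity
    exact mul_pos (by positivity) (add_pos_of_nonneg_of_pos (hc i) (mul_pos hε hui))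
  · simp only [Pi.smul_apply, Pi.add_apply, smul_eq_mul, ← Finset.mul_sum, Finset.sum_add_distrib,
      hc1, hu.2]
    field_simp
  · simp only [Pi.smul_apply, Pi.add_apply, smul_assoc, add_smul, ← Finset.smul_sum,
      Finset.sum_add_distrib, hcp]
    rw [inv_smul_eq_iff₀ (by positivity)]
    module

theorem exists_pos_sum_smul_eq_of_mem_intrinsicInterior_smul {ι E : Type*} [Fintype ι] [Nonempty ι]
    [NormedAddCommGroup E] [NormedSpace ℝ E] {p : ι → E} {x : E} {r : ℝ} (hr : 0 < r)
    (hx : x ∈ intrinsicInterior ℝ (r • convexHull ℝ (Set.range p))) :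
    ∃ w : ι → ℝ, (∀ i, 0 < w i) ∧ ∑ i, w i = r ∧ ∑ i, w i • p i = x := by
  rw [← convexHull_smul, ← Set.range_smul] at hx
  obtain ⟨c, hc, hc1, hcx⟩ := exists_pos_sum_smul_eq_of_mem_intrinsicInterior hx
  refine ⟨fun i => c i * r, fun i => mul_pos (hc i) hr, ?_, ?_⟩
  · rw [← Finset.sum_mul, hc1, one_mul]
  · simpa only [mul_smul] using hcx

end ConvexHull

section AffineRestrictions

variable {ι E : Type*} [AddCommGroup E] [Module ℝ E]

/-- The values of affine functionals at the points of the family `p`, as a space of vectors. -/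
def affineRestrictions (p : ι → E) : Submodule ℝ (ι → ℝ) where
  carrier := {f | ∃ a : E →ᵃ[ℝ] ℝ, ∀ i, a (p i) = f i}
  add_mem' := by
    rintro f g ⟨a, ha⟩ ⟨b, hb⟩
    exact ⟨a + b, fun i => congrArg₂ (· + ·) (ha i) (hb i)⟩
  zero_mem' := ⟨0, fun _ => rfl⟩
  smul_mem' := by
    rintro c f ⟨a, ha⟩
    exact ⟨c • a, fun i => congrArg (c * ·) (ha i)⟩

variable {p : ι → E}

theorem exists_affineMap_extend {S : AffineSubspace ℝ E} [Nonempty S] (a : S →ᵃ[ℝ] ℝ) :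
    ∃ b : E →ᵃ[ℝ] ℝ, ∀ x : S, b x = a x := by
  obtain ⟨x₀⟩ := ‹Nonempty S›
  obtain ⟨ψ, hψ⟩ := LinearMap.exists_extend a.linear
  refine ⟨ψ.toAffineMap + AffineMap.const ℝ E (a x₀ - ψ x₀), fun x => ?_⟩
  have hdiff : a x - a x₀ = ψ x - ψ x₀ := by
    rw [← map_sub ψ]
    exact (a.linearMap_vsub x x₀).symm.trans (LinearMap.congr_fun hψ (x -ᵥ x₀)).symm
  simp only [AffineMap.coe_add, Pi.add_apply, LinearMap.coe_toAffineMap, AffineMap.coe_const,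
    Function.const_apply]
  linarith

theorem finrank_affineRestrictions [Finite ι] [Nonempty ι] (p : ι → E) :
    Module.finrank ℝ (affineRestrictions p) =
      Module.finrank ℝ (vectorSpan ℝ (Set.range p)) + 1 := by
  let S := affineSpan ℝ (Set.range p)
  let q : ι → S := fun i => ⟨p i, mem_affineSpan ℝ ⟨i, rfl⟩⟩
  have hq : affineSpan ℝ (Set.range q) = ⊤ := by
    convert affineSpan_coe_preimage_eq_top (k := ℝ) (Set.range p)
    ext x
    simp [q, Subtype.ext_iff]
  let Θ : (S →ᵃ[ℝ] ℝ) →ₗ[ℝ] (ι → ℝ) :=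
    { toFun a := a ∘ q
      map_add' _ _ := rfl
      map_smul' _ _ := rfl }
  have hinj : Function.Injective Θ := fun a b hab =>
    AffineMap.ext_on hq (Set.eqOn_range.2 hab)
  have hrange : LinearMap.range Θ = affineRestrictions p := by
    ext f
    constructor
    · rintro ⟨a, rfl⟩
      obtain ⟨b, hb⟩ := exists_affineMap_extend a
      exact ⟨b, fun i => hb (q i)⟩
    · rintro ⟨a, ha⟩
      exact ⟨a.comp S.subtype, funext ha⟩
  have hdir : FiniteDimensional ℝ S.direction := by
    rw [direction_affineSpan]
    exact finiteDimensional_vectorSpan_range ℝ p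
  rw [← hrange, LinearMap.finrank_range_of_inj hinj, AffineMap.finrank_eq, direction_affineSpan,
    Module.finrank_self, mul_one]

theorem finrank_affineRestrictions_zeros_add_one [Finite ι] {f : ι → ℝ}
    (hf : IsExtremal (affineRestrictions p) f) :
    Module.finrank ℝ (affineRestrictions fun i : {i | f i = 0} => p i) + 1 =
      Module.finrank ℝ (affineRestrictions p) := by
  let ρ := (LinearMap.funLeft ℝ ℝ ((↑) : {i | f i = 0} → ι)).domRestrict (affineRestrictions p)
  have hrange : LinearMap.range ρ = affineRestrictions fun i : {i | f i = 0} => p i := by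
    ext h
    constructor
    · rintro ⟨⟨k, a, ha⟩, rfl⟩
      exact ⟨a, fun i => ha i⟩
    · rintro ⟨a, ha⟩
      exact ⟨⟨_, a, fun i => rfl⟩, funext ha⟩
  have hker : LinearMap.ker ρ = ℝ ∙ (⟨f, hf.1.1⟩ : affineRestrictions p) := by
    ext ⟨g, hg⟩
    rw [LinearMap.mem_ker, Submodule.mem_span_singleton]
    constructor
    · intro hzero
      obtain ⟨t, rfl⟩ := hf.exists_eq_smul hg fun i hgi hfi => hgi (congrFun hzero ⟨i, hfi⟩)
      exact ⟨t, rfl⟩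
    · rintro ⟨t, ht⟩
      obtain rfl : t • f = g := congrArg Subtype.val ht
      exact funext fun i => mul_eq_zero_of_right t i.2
  have hne : (⟨f, hf.1.1⟩ : affineRestrictions p) ≠ 0 := fun h =>
    hf.1.2.2 (congrArg Subtype.val h)
  rw [← hrange, ← finrank_span_singleton (K := ℝ) hne, ← hker,
    LinearMap.finrank_range_add_finrank_ker]

theorem exists_mem_affineRestrictions_eq_zero_pos {ι E : Type*} [Finite ι] [NormedAddCommGroup E]
    [NormedSpace ℝ E] [FiniteDimensional ℝ E] {p : ι → E} (hp : ConvexIndependent ℝ p) (i : ι) :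
    ∃ g ∈ affineRestrictions p, g i = 0 ∧ ∀ j, j ≠ i → 0 < g j := by
  obtain ⟨l, u, hi, hu⟩ := geometric_hahn_banach_point_closed (convex_convexHull ℝ (p '' {i}ᶜ))
    (((Set.toFinite {i}ᶜ).image p).isClosed_convexHull ℝ)
    (fun h => (hp _ i h : i ∈ ({i} : Set ι)ᶜ) rfl)
  refine ⟨fun j => l (p j) - l (p i), ⟨l.toAffineMap - AffineMap.const ℝ E (l (p i)),
    fun j => rfl⟩, sub_self _, fun j hj => ?_⟩
  exact sub_pos.2 (hi.trans (hu _ (subset_convexHull ℝ _ ⟨j, hj, rfl⟩)))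

end AffineRestrictions

section Facets

variable {N : ℕ} {P F : Set (Fin N → ℝ)}

theorem isExposed_setOf_eq_zero {E : Type*} [NormedAddCommGroup E] [NormedSpace ℝ E]
    [FiniteDimensional ℝ E] {A : Set E} {a : E →ᵃ[ℝ] ℝ} (ha : ∀ x ∈ A, 0 ≤ a x)
    (hzero : ∃ x ∈ A, a x = 0) : IsExposed ℝ A {x ∈ A | a x = 0} := by
  have hsub : ∀ x y, (-a.linear) y ≤ (-a.linear) x ↔ a x ≤ a y := fun x y => by
    rw [LinearMap.neg_apply, LinearMap.neg_apply, neg_le_neg_iff, a.decomp]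
    exact (add_le_add_iff_right (a 0)).symm
  obtain ⟨x₀, hx₀, hax₀⟩ := hzero
  refine fun _ => ⟨LinearMap.toContinuousLinearMap (-a.linear), ?_⟩
  ext x
  simp only [LinearMap.coe_toContinuousLinearMap', Set.mem_ofPred_eq, hsub]
  exact and_congr_right fun hx =>
    ⟨fun h y hy => h.trans_le (ha y hy), fun h => ((h x₀ hx₀).trans_eq hax₀).antisymm (ha x hx)⟩

theorem polyDim_convexHull (S : Set (Fin N → ℝ)) :
    polyDim (convexHull ℝ S) = Module.finrank ℝ (vectorSpan ℝ S) := by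
  rw [polyDim, affineSpan_convexHull, direction_affineSpan]

theorem polyDim_smul {r : ℝ} (hr : r ≠ 0) (P : Set (Fin N → ℝ)) : polyDim (r • P) = polyDim P := by
  rw [polyDim, polyDim, ← AffineSubspace.smul_span, AffineSubspace.direction_smul hr]

theorem IsFacet.smul (hF : IsFacet P F) {r : ℝ} (hr : 0 < r) : IsFacet (r • P) (r • F) := by
  obtain ⟨hexp, hne, hdim⟩ := hF
  refine ⟨fun _ => ?_, hne.smul_set, by rwa [polyDim_smul hr.ne', polyDim_smul hr.ne']⟩
  obtain ⟨l, rfl⟩ := hexp hne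
  refine ⟨l, ?_⟩
  ext x
  simp only [Set.mem_smul_set_iff_inv_smul_mem₀ hr.ne', Set.mem_ofPred_eq]
  refine and_congr_right fun _ => ⟨fun h y hy => ?_, fun h y hy => ?_⟩
  · have := h _ hy
    rwa [map_smul, map_smul, smul_le_smul_iff_of_pos_left (inv_pos.2 hr)] at this
  · have := h (r • y) (by rwa [inv_smul_smul₀ hr.ne'])
    rwa [map_smul, ← le_inv_smul_iff_of_pos hr, ← map_smul] at this

theorem isFacet_convexHull_zeros {ι : Type*} [Finite ι] {p : ι → Fin N → ℝ} {f : ι → ℝ}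
    (hf : IsExtremal (affineRestrictions p) f) (hzero : ∃ i, f i = 0) :
    IsFacet (convexHull ℝ (Set.range p)) (convexHull ℝ (p '' {i | f i = 0})) := by
  obtain ⟨a, ha⟩ := hf.1.1
  obtain ⟨i₀, hi₀⟩ := hzero
  have hnonneg : ∀ i, 0 ≤ a (p i) := fun i => (hf.1.2.1 i).trans_eq (ha i).symm
  have hface : convexHull ℝ (p '' {i | f i = 0}) =
      {y ∈ convexHull ℝ (Set.range p) | a y = 0} := by
    ext y
    simp only [← ha]
    have hmono : y ∈ convexHull ℝ (p '' {i | a (p i) = 0}) → y ∈ convexHull ℝ (Set.range p) :=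
      fun hy => convexHull_mono (Set.image_subset_range p _) hy
    exact ⟨fun hy => ⟨hmono hy,
      (apply_eq_zero_iff_mem_convexHull_zeros hnonneg (hmono hy)).2 hy⟩,
      fun hy => (apply_eq_zero_iff_mem_convexHull_zeros hnonneg hy.1).1 hy.2⟩
  have hmem : p i₀ ∈ convexHull ℝ (p '' {i | f i = 0}) := subset_convexHull ℝ _ ⟨i₀, hi₀, rfl⟩
  refine ⟨?_, ⟨_, hmem⟩, ?_⟩
  · have hsub : convexHull ℝ (Set.range p) ⊆ a ⁻¹' Set.Ici 0 :=
      convexHull_min (Set.range_subset_iff.2 hnonneg) ((convex_Ici (0 : ℝ)).affine_preimage a)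
    rw [hface] at hmem ⊢
    exact isExposed_setOf_eq_zero hsub ⟨p i₀, hmem⟩
  · have : Nonempty {i | f i = 0} := ⟨⟨i₀, hi₀⟩⟩
    have : Nonempty ι := ⟨i₀⟩
    have hdim := finrank_affineRestrictions_zeros_add_one hf
    rw [finrank_affineRestrictions, finrank_affineRestrictions, ← Set.image_eq_range] at hdim
    rw [polyDim_convexHull, polyDim_convexHull]
    exact Nat.succ_injective hdim

end Facets

section LatticePolytopes

variable {N : ℕ} {P : Set (Fin N → ℝ)} {x y : Fin N → ℝ}

theorem IsLatticePt.add (hx : IsLatticePt x) (hy : IsLatticePt y) : IsLatticePt (x + y) := by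
  intro i
  obtain ⟨m, hm⟩ := hx i
  obtain ⟨n, hn⟩ := hy i
  exact ⟨m + n, by simp [hm, hn]⟩

theorem IsLatticePt.intCast_smul (hx : IsLatticePt x) (n : ℤ) : IsLatticePt ((n : ℝ) • x) := by
  intro i
  obtain ⟨m, hm⟩ := hx i
  exact ⟨n * m, by simp [hm]⟩

theorem IsLatticePolytope.exists_convexIndependent (hP : IsLatticePolytope P) :
    ∃ V : Finset (Fin N → ℝ), V.Nonempty ∧ (∀ v ∈ V, IsLatticePt v) ∧
      ConvexIndependent ℝ ((↑) : V → Fin N → ℝ) ∧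
      P = convexHull ℝ (Set.range ((↑) : V → Fin N → ℝ)) := by
  obtain ⟨W, hW, hlat, rfl⟩ := hP
  let V := (convexHull ℝ (W : Set (Fin N → ℝ))).extremePoints ℝ
  have hVW : V ⊆ W := extremePoints_convexHull_subset
  have hV : convexHull ℝ V = convexHull ℝ W := by
    rw [← ((W.finite_toSet.subset hVW).isClosed_convexHull ℝ).closure_eq]
    exact closure_convexHull_extremePoints (W.finite_toSet.isCompact_convexHull ℝ)
      (convex_convexHull ℝ _)
  obtain ⟨V', hV'⟩ := (W.finite_toSet.subset hVW).exists_finset_coe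
  refine ⟨V', ?_, fun v hv => hlat v (hVW (hV' ▸ hv)), ?_, ?_⟩
  · rw [← Finset.coe_nonempty, hV', ← convexHull_nonempty_iff (𝕜 := ℝ), hV]
    exact convexHull_nonempty_iff.2 hW
  · have := (convex_convexHull ℝ (W : Set (Fin N → ℝ))).convexIndependent_extremePoints
    change ConvexIndependent ℝ ((↑) : V → Fin N → ℝ) at this
    rwa [← hV'] at this
  · rw [Subtype.range_coe_subtype, Finset.setOfPred_mem, hV', hV]

end LatticePolytopes

section Reflexive

variable {N : ℕ} {P : Set (Fin N → ℝ)}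

theorem IsIntegralOn.exists_eq_natCast {u : (Fin N → ℝ) →ᵃ[ℝ] ℝ} (hu : IsIntegralOn P u)
    {x : Fin N → ℝ} (hx : x ∈ P) (hxl : IsLatticePt x) (hnonneg : 0 ≤ u x) : ∃ n : ℕ, u x = n := by
  obtain ⟨n, hn⟩ := hu x (subset_affineSpan ℝ P hx) hxl
  rw [hn, Int.cast_nonneg_iff] at hnonneg
  lift n to ℕ using hnonneg
  exact ⟨n, by rw [hn, Int.cast_natCast]⟩

theorem IsIntegralOn.exists_eq_linear_sub {r : ℕ} (hr : 0 < r) {u : (Fin N → ℝ) →ᵃ[ℝ] ℝ}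
    (hu : IsIntegralOn ((r : ℝ) • P) u) {v : Fin N → ℝ} (hv : v ∈ P) (hvl : IsLatticePt v) :
    ∃ U : (Fin N → ℝ) →ᵃ[ℝ] ℝ, IsIntegralOn P U ∧ ∀ y, U y = u.linear (v - y) := by
  have hr' : (r : ℝ) ≠ 0 := Nat.cast_ne_zero.2 hr.ne'
  have hvP : v ∈ affineSpan ℝ P := subset_affineSpan ℝ P hv
  have hshift : ∀ y ∈ affineSpan ℝ P,
      y + ((r : ℝ) - 1) • v ∈ affineSpan ℝ ((r : ℝ) • P) := by
    intro y hy
    rw [← AffineSubspace.smul_span]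
    convert (AffineSubspace.smul_mem_smul_iff₀ hr').2
      (AffineMap.lineMap_mem ((r : ℝ)⁻¹) hvP hy) using 1
    rw [AffineMap.lineMap_apply_module', smul_add, smul_smul, mul_inv_cancel₀ hr']
    module
  have hshiftl : ∀ y, IsLatticePt y → IsLatticePt (y + ((r : ℝ) - 1) • v) := fun y hy =>
    hy.add (by simpa using hvl.intCast_smul (r - 1))
  let U : (Fin N → ℝ) →ᵃ[ℝ] ℝ := (-u.linear).toAffineMap + AffineMap.const ℝ _ (u.linear v)
  have hU : ∀ y, U y = u.linear (v - y) := fun y => by simp [U, ← sub_eq_neg_add]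
  refine ⟨U, fun y hy hyl => ?_, hU⟩
  obtain ⟨m, hm⟩ := hu _ (hshift v hvP) (hshiftl v hvl)
  obtain ⟨n, hn⟩ := hu _ (hshift y hy) (hshiftl y hyl)
  have hsub : v - y = (v + ((r : ℝ) - 1) • v) -ᵥ (y + ((r : ℝ) - 1) • v) :=
    (add_sub_add_right_eq_sub _ _ _).symm
  refine ⟨m - n, ?_⟩
  rw [hU, hsub, u.linearMap_vsub, hm, hn, vsub_eq_sub, Int.cast_sub]

theorem exists_isIntegralOn_eq_of_mem_normalizedExtremals {ι : Type*} [Fintype ι]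
    {p : ι → Fin N → ℝ} (hp : ∀ i, IsLatticePt (p i)) {r : ℕ} (hr : 0 < r) {x : Fin N → ℝ}
    (hrefl : ∀ F, IsFacet ((r : ℝ) • convexHull ℝ (Set.range p)) F →
      ∃ u, IsIntegralOn ((r : ℝ) • convexHull ℝ (Set.range p)) u ∧ ∀ f ∈ F, u f = u x + 1)
    {w : ι → ℝ} (hw : ∑ i, w i = r) (hwx : ∑ i, w i • p i = x) {f : ι → ℝ}
    (hf : f ∈ normalizedExtremals (affineRestrictions p) w) (hzero : ∃ i, f i = 0) :
    ∃ U, IsIntegralOn (convexHull ℝ (Set.range p)) U ∧ ∀ i, U (p i) = f i := by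
  have hr' : (0 : ℝ) < r := Nat.cast_pos.2 hr
  obtain ⟨u, hu, hux⟩ := hrefl _ ((isFacet_convexHull_zeros hf.1 hzero).smul hr')
  obtain ⟨i₀, hi₀⟩ := hzero
  have hux' : ∀ i, f i = 0 → u ((r : ℝ) • p i) = u x + 1 := fun i hi =>
    hux _ (Set.smul_mem_smul_set (subset_convexHull ℝ _ ⟨i, hi, rfl⟩))
  obtain ⟨U, hU, hUu⟩ := hu.exists_eq_linear_sub hr (subset_convexHull ℝ _ ⟨i₀, rfl⟩) (hp i₀)
  have hUzero : ∀ i, f i = 0 → U (p i) = 0 := by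
    intro i hi
    have hru : (r : ℝ) • U (p i) = 0 := by
      rw [hUu, ← map_smul, smul_sub, ← vsub_eq_sub, u.linearMap_vsub, hux' i hi, hux' i₀ hi₀,
        vsub_self]
    exact (smul_eq_zero.1 hru).resolve_left hr'.ne'
  have hUw : (fun i => U (p i)) ⬝ᵥ w = 1 := by
    have hsum : (r : ℝ) • p i₀ - x = ∑ i, w i • (p i₀ - p i) := by
      rw [← hwx, ← hw, Finset.sum_smul, ← Finset.sum_sub_distrib]
      simp only [smul_sub]
    calc (fun i => U (p i)) ⬝ᵥ w = u.linear ((r : ℝ) • p i₀ - x) := by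
          simp only [hsum, map_sum, map_smul, hUu, dotProduct, smul_eq_mul, mul_comm]
      _ = 1 := by
          rw [← vsub_eq_sub, u.linearMap_vsub, hux' i₀ hi₀, vsub_eq_sub, add_sub_cancel_left]
  obtain ⟨t, ht⟩ := hf.1.exists_eq_smul (g := fun i => U (p i)) ⟨U, fun i => rfl⟩
    fun i hUi hi => hUi (hUzero i hi)
  have ht1 : t = 1 := by
    rwa [ht, smul_dotProduct, hf.2, smul_eq_mul, mul_one] at hUw
  exact ⟨U, hU, fun i => by rw [congrFun ht i, ht1, one_smul]⟩

end Reflexive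

section LatticePyramids

variable {N : ℕ} {P : Set (Fin N → ℝ)}

theorem IsLatticePt.snoc {x : Fin N → ℝ} (hx : IsLatticePt x) (n : ℤ) :
    IsLatticePt (Fin.snoc x (n : ℝ) : Fin (N + 1) → ℝ) :=
  Fin.lastCases ⟨n, Fin.snoc_last _ _⟩ fun i => by rw [Fin.snoc_castSucc]; exact hx i

/-- The affine map `x ↦ (x - U x • a, U x)`. It fixes the hyperplane `U = 0`, embedded at height
zero, and moves a point `a` with `U a = 1` to the apex of a standard lattice pyramid. -/
def pyramidMap (U : (Fin N → ℝ) →ᵃ[ℝ] ℝ) (a : Fin N → ℝ) :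
    (Fin N → ℝ) →ᵃ[ℝ] (Fin (N + 1) → ℝ) where
  toFun x := Fin.snoc (x - U x • a) (U x)
  linear :=
    { toFun x := Fin.snoc (x - U.linear x • a) (U.linear x)
      map_add' x y := funext <| Fin.lastCases (by simp) fun j => by simp; ring
      map_smul' c x := funext <| Fin.lastCases (by simp) fun j => by simp; ring }
  map_vadd' x v := by
    have hU : U (v + x) = U.linear v + U x := U.map_vadd x v
    exact funext <| Fin.lastCases (by simp [hU]) fun j => by simp [hU]; ring

/-- The linear map `(x, t) ↦ x + t • a`, a left inverse of `pyramidMap U a`. -/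
def pyramidInverse (a : Fin N → ℝ) : (Fin (N + 1) → ℝ) →ₗ[ℝ] (Fin N → ℝ) :=
  LinearMap.funLeft ℝ ℝ Fin.castSucc + (LinearMap.proj (Fin.last N)).smulRight a

theorem latticeIso_image {M : ℕ} {f : (Fin N → ℝ) →ᵃ[ℝ] (Fin M → ℝ)}
    {g : (Fin M → ℝ) →ᵃ[ℝ] (Fin N → ℝ)} (hgf : ∀ x, g (f x) = x)
    (hf : ∀ x ∈ affineSpan ℝ P, IsLatticePt x → IsLatticePt (f x))
    (hg : ∀ y, IsLatticePt y → IsLatticePt (g y)) : LatticeIso P (f '' P) := by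
  refine ⟨f, g, rfl, ?_, fun x _ => hgf x, ?_, hf, fun y _ => hg y⟩
  · rw [← Set.image_comp, show g ∘ f = id from funext hgf, Set.image_id]
  · intro y hy
    rw [← AffineSubspace.map_span] at hy
    obtain ⟨x, -, rfl⟩ := hy
    exact congrArg f (hgf x)

theorem latticeIso_pyramidMap_image {U : (Fin N → ℝ) →ᵃ[ℝ] ℝ} (hU : IsIntegralOn P U)
    {a : Fin N → ℝ} (ha : IsLatticePt a) : LatticeIso P (pyramidMap U a '' P) := by
  have hinv : ∀ y, (pyramidInverse a).toAffineMap y = Fin.init y + y (Fin.last N) • a :=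
    fun _ => rfl
  refine latticeIso_image (g := (pyramidInverse a).toAffineMap) (fun x => ?_) (fun x hx hxl => ?_)
    fun y hy => ?_
  · rw [hinv]
    simp [pyramidMap]
  · obtain ⟨n, hn⟩ := hU x hx hxl
    have hlat : IsLatticePt (x - (n : ℝ) • a) := by
      simpa [sub_eq_add_neg] using hxl.add (ha.intCast_smul (-n))
    simpa [pyramidMap, hn] using hlat.snoc n
  · obtain ⟨n, hn⟩ := hy (Fin.last N)
    rw [hinv, hn]
    exact IsLatticePt.add (fun i => hy _) (ha.intCast_smul n)

theorem pyramidOver_convexHull (S : Set (Fin N → ℝ)) :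
    pyramidOver (convexHull ℝ S) =
      convexHull ℝ ((fun x => Fin.snoc x (0 : ℝ)) '' S ∪ {Fin.snoc (0 : Fin N → ℝ) (1 : ℝ)}) := by
  have hmap : (fun x => Fin.snoc x (0 : ℝ) : (Fin N → ℝ) → Fin (N + 1) → ℝ) = pyramidMap 0 0 := by
    ext x
    simp [pyramidMap]
  rw [pyramidOver, hmap, AffineMap.image_convexHull, convexHull_convexHull_union_left]

theorem pyramidMap_image_convexHull {ι : Type*} {p : ι → Fin N → ℝ} {i₀ : ι}
    {U : (Fin N → ℝ) →ᵃ[ℝ] ℝ} (hapex : U (p i₀) = 1) (hbase : ∀ i, i ≠ i₀ → U (p i) = 0) :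
    pyramidMap U (p i₀) '' convexHull ℝ (Set.range p) =
      pyramidOver (convexHull ℝ (p '' {i₀}ᶜ)) := by
  have hrange : Set.range p = p '' {i₀}ᶜ ∪ {p i₀} := by
    rw [← Set.image_singleton, ← Set.image_union, Set.compl_union_self, Set.image_univ]
  rw [pyramidOver_convexHull, AffineMap.image_convexHull, hrange, Set.image_union,
    Set.image_singleton]
  congr 2
  · refine Set.image_congr ?_
    rintro _ ⟨i, hi, rfl⟩
    simp [pyramidMap, hbase i hi]
  · simp [pyramidMap, hapex]

theorem isLatticePyramid_of_apply_eq_single {ι : Type*} [Finite ι] [Nontrivial ι] [DecidableEq ι]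
    {p : ι → Fin N → ℝ} (hp : ∀ i, IsLatticePt (p i)) {U : (Fin N → ℝ) →ᵃ[ℝ] ℝ}
    (hU : IsIntegralOn (convexHull ℝ (Set.range p)) U) {i₀ : ι}
    (hUp : ∀ i, U (p i) = (Pi.single i₀ 1 : ι → ℝ) i) :
    IsLatticePyramid (convexHull ℝ (Set.range p)) := by
  have hfin : (p '' {i₀}ᶜ).Finite := (Set.toFinite _).image p
  obtain ⟨i, hi⟩ := exists_ne i₀
  refine Or.inr ⟨N, convexHull ℝ (p '' {i₀}ᶜ),
    ⟨hfin.toFinset, ?_, ?_, by rw [hfin.coe_toFinset]⟩, ?_⟩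
  · exact ⟨p i, hfin.mem_toFinset.2 ⟨i, hi, rfl⟩⟩
  · simpa using fun i _ => hp i
  · rw [← pyramidMap_image_convexHull (by rw [hUp, Pi.single_eq_same])
      fun i hi => by rw [hUp, Pi.single_eq_of_ne hi]]
    exact latticeIso_pyramidMap_image hU (hp i₀)

end LatticePyramids

theorem isLatticePyramid_of_isReflexivePolytope_smul {N : ℕ} {P : Set (Fin N → ℝ)}
    (hP : IsLatticePolytope P) {r : ℕ} (hr : 0 < r) (hrefl : IsReflexivePolytope ((r : ℝ) • P))
    (hdim : 2 * (polyDim P + 1) < 3 * r) : IsLatticePyramid P := by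
  classical
  obtain ⟨V, ⟨v, hv⟩, hlat, hconv, rfl⟩ := hP.exists_convexIndependent
  have : Nonempty V := ⟨⟨v, hv⟩⟩
  obtain hsub | hnontriv := subsingleton_or_nontrivial V
  · refine Or.inl ⟨v, hlat v hv, ?_⟩
    rw [(Set.subsingleton_range _).eq_singleton_of_mem (Set.mem_range_self (⟨v, hv⟩ : V)),
      convexHull_singleton]
  obtain ⟨x, hx, -, hfacets⟩ := hrefl
  obtain ⟨w, hw, hwr, hwx⟩ :=
    exists_pos_sum_smul_eq_of_mem_intrinsicInterior_smul (Nat.cast_pos.2 hr) hx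
  let L := affineRestrictions ((↑) : V → Fin N → ℝ)
  have hsep := exists_mem_affineRestrictions_eq_zero_pos hconv
  have hheight : ∀ f ∈ normalizedExtremals L w, ∃ U,
      IsIntegralOn (convexHull ℝ (Set.range ((↑) : V → Fin N → ℝ))) U ∧ ∀ i : V, U i = f i := by
    intro f hf
    refine exists_isIntegralOn_eq_of_mem_normalizedExtremals (p := ((↑) : V → Fin N → ℝ))
      (fun i => hlat i i.2) hr hfacets hwr hwx hf (hf.1.exists_eq_zero fun u v huv => ?_)
    obtain ⟨g, hg, hgu, hpos⟩ := hsep u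
    exact ⟨g, hg, hgu, (hpos v huv.symm).ne'⟩
  have hnat : ∀ f ∈ normalizedExtremals L w, ∀ i, ∃ n : ℕ, f i = n := by
    intro f hf i
    obtain ⟨U, hU, hUf⟩ := hheight f hf
    rw [← hUf i]
    exact hU.exists_eq_natCast (subset_convexHull ℝ _ ⟨i, rfl⟩) (hlat i i.2)
      (hUf i ▸ hf.1.1.2.1 i)
  obtain ⟨i, hi⟩ := exists_single_mem_normalizedExtremals hw
    (show 1 ∈ L from ⟨AffineMap.const ℝ _ 1, fun _ => rfl⟩) hsep hnat (by
      rw [finrank_affineRestrictions, ← polyDim_convexHull, hwr]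
      exact_mod_cast hdim)
  obtain ⟨U, hU, hUi⟩ := hheight _ hi
  exact isLatticePyramid_of_apply_eq_single (fun i => hlat i i.2) hU hUi

/-- **Batyrev–Juny conjecture** (Theorem 1.1): a Gorenstein polytope of dimension `d`
and degree `s` with `d ≥ 3s` is a lattice pyramid. -/
theorem stmt0 {N d s : ℕ} (P : Set (Fin N → ℝ))
    (hP : IsLatticePolytope P) (hGor : IsGorenstein P)
    (hd : polyDim P = d) (hs : polyDeg P = s) (h : 3 * s ≤ d) :
    IsLatticePyramid P := by
  obtain ⟨r, hr, hrefl⟩ := hGor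
  have hcodeg : polyCodeg P ≤ r := by
    obtain ⟨x, hx, hxl, -⟩ := hrefl
    exact Nat.sInf_le ⟨hr, fun hhollow => hhollow x hx hxl⟩
  refine isLatticePyramid_of_isReflexivePolytope_smul hP hr hrefl ?_
  rw [polyDeg] at hs
  omega
end

section
/- Let P_1, …, P_l ⊂ ℝ^n be lattice polytopes with dim(P_i) ≥ 1 for all i, and let k_1, …, k_l be positive integers such that k_1 P_1 + ⋯ + k_l P_l is, up to a lattice translation, a reflexive polytope. Then k_1 + ⋯ + k_l ≤ 2n. -/
open Pointwise

/-!
Let `Q = ∑ kᵢ Pᵢ`, translated to be reflexive with interior lattice point `x = ∑ kᵢ pᵢ`, `pᵢ ∈ Pᵢ`.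
The facets of `Q` are `u = u x + 1` with `u` running over the vertices of the polar of `Q - x`, and
reflexivity makes each `u` integral. The vertices `u` generate the dual space as a cone, so by
Steinitz's theorem already some `2 dim Q` of them do; call this set `S`. Summing `maxₚᵢ u - u pᵢ`
over `i` with weights `kᵢ` gives at most `1` for each `u ∈ S`, because `u ≤ u x + 1` on `Q`. Summing
it over `u ∈ S` gives at least `1` for each `i`: at a lattice point of `Pᵢ` the summands are
nonnegative integers, not all `0` because `S` positively spans and `Pᵢ` is not a point, and the
bound extends to `pᵢ` by convexity. Hence `∑ kᵢ ≤ |S| ≤ 2 dim Q`.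
-/

section ConicHull

variable {𝕜 E : Type*} [Field 𝕜] [LinearOrder 𝕜] [IsStrictOrderedRing 𝕜] [AddCommGroup E]
  [Module 𝕜 E]

theorem mem_pointedConeHull_finset_iff {s : Finset E} {x : E} :
    x ∈ PointedCone.hull 𝕜 (s : Set E) ↔
      ∃ c : E → 𝕜, (∀ e ∈ s, 0 ≤ c e) ∧ ∑ e ∈ s, c e • e = x := by
  classical
  constructor
  · intro hx
    obtain ⟨c, -, hc⟩ := Submodule.mem_span_finset.1 hx
    exact ⟨fun e => c e, fun e _ => (c e).2, hc⟩
  · rintro ⟨c, hc, rfl⟩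
    exact Submodule.sum_mem _ fun e he =>
      PointedCone.smul_mem _ (hc e he) (PointedCone.subset_hull he)

theorem exists_mem_pointedConeHull_erase [DecidableEq E] {s : Finset E} {x : E}
    (hs : ¬LinearIndepOn 𝕜 id (s : Set E)) (hx : x ∈ PointedCone.hull 𝕜 (s : Set E)) :
    ∃ y ∈ s, x ∈ PointedCone.hull 𝕜 (s.erase y : Set E) := by
  obtain ⟨c, hc, rfl⟩ := mem_pointedConeHull_finset_iff.1 hx
  obtain ⟨f, hf, e, he, hfe⟩ : ∃ f : E → 𝕜, ∑ e ∈ s, f e • e = 0 ∧ ∃ e ∈ s, 0 < f e := by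
    obtain ⟨f, hf, e, he, hfe⟩ := not_linearIndepOn_finset_iff.1 hs
    rcases hfe.lt_or_gt with hneg | hpos
    · exact ⟨-f, by simpa using hf, e, he, neg_pos.2 hneg⟩
    · exact ⟨f, hf, e, he, hpos⟩
  obtain ⟨y, hy, hmin⟩ := (s.filter (0 < f ·)).exists_min_image (fun e => c e / f e)
    ⟨e, Finset.mem_filter.2 ⟨he, hfe⟩⟩
  obtain ⟨hys, hfy⟩ := Finset.mem_filter.1 hy
  set r := c y / f y with hr
  have hr₀ : 0 ≤ r := div_nonneg (hc y hys) hfy.le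
  have hcy : c y - r * f y = 0 := by rw [hr, div_mul_cancel₀ _ hfy.ne', sub_self]
  refine ⟨y, hys, mem_pointedConeHull_finset_iff.2 ⟨fun e => c e - r * f e, fun e he => ?_, ?_⟩⟩
  · have hes := Finset.mem_of_mem_erase he
    rcases lt_or_ge 0 (f e) with hfe | hfe
    · exact sub_nonneg.2 ((le_div_iff₀ hfe).1 (hmin e (Finset.mem_filter.2 ⟨hes, hfe⟩)))
    · exact sub_nonneg.2 ((mul_nonpos_of_nonneg_of_nonpos hr₀ hfe).trans (hc e hes))
  · rw [Finset.sum_erase _ (by simp only [hcy, zero_smul])]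
    simp only [sub_smul, mul_smul, Finset.sum_sub_distrib, ← Finset.smul_sum, hf, smul_zero,
      sub_zero]

/-- **Carathéodory's theorem** for cones. -/
theorem exists_linearIndepOn_mem_pointedConeHull {U : Set E} {x : E}
    (hx : x ∈ PointedCone.hull 𝕜 U) :
    ∃ T : Finset E, ↑T ⊆ U ∧ LinearIndepOn 𝕜 id (T : Set E) ∧
      x ∈ PointedCone.hull 𝕜 (T : Set E) := by
  classical
  obtain ⟨s, hsU, hxs⟩ := Submodule.mem_span_finite_of_mem_span hx
  induction s using Finset.strongInduction with
  | H s ih =>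
    by_cases hs : LinearIndepOn 𝕜 id (s : Set E)
    · exact ⟨s, hsU, hs, hxs⟩
    · obtain ⟨y, hy, hxy⟩ := exists_mem_pointedConeHull_erase hs hxs
      have hss := Finset.erase_ssubset hy
      exact ih _ hss ((Finset.coe_subset.2 hss.subset).trans hsU) hxy

/-- **Steinitz's theorem** on positive spanning sets. -/
theorem exists_finset_pointedConeHull_eq_top [FiniteDimensional 𝕜 E] {U : Set E}
    (hU : PointedCone.hull 𝕜 U = ⊤) :
    ∃ S : Finset E, ↑S ⊆ U ∧ S.card ≤ 2 * Module.finrank 𝕜 E ∧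
      PointedCone.hull 𝕜 (S : Set E) = ⊤ := by
  classical
  have hspan : Submodule.span 𝕜 U = ⊤ :=
    eq_top_iff.2 fun x _ => PointedCone.hull_le_span 𝕜 U (hU ▸ Submodule.mem_top)
  obtain ⟨B, hBU, hBcard, hBspan, -⟩ := Submodule.exists_finset_span_eq_linearIndepOn 𝕜 U
  obtain ⟨T, hTU, hT, hBT⟩ := exists_linearIndepOn_mem_pointedConeHull
    (hU ▸ Submodule.mem_top : -∑ b ∈ B, b ∈ PointedCone.hull 𝕜 U)
  set C := PointedCone.hull 𝕜 ((B ∪ T : Finset E) : Set E)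
  have hB : ∀ b ∈ B, b ∈ C := fun b hb =>
    PointedCone.subset_hull (Finset.mem_union_left _ hb)
  have hsum : -∑ b ∈ B, b ∈ C :=
    Submodule.span_mono (Finset.coe_subset.2 Finset.subset_union_right) hBT
  have hneg : ∀ b ∈ B, -b ∈ C := fun b hb => by
    have := add_mem (sum_mem fun a (ha : a ∈ B.erase b) => hB a (Finset.mem_of_mem_erase ha)) hsum
    rwa [← Finset.add_sum_erase _ _ hb, neg_add_rev, add_neg_cancel_left] at this
  have hlineal : Submodule.span 𝕜 (B : Set E) ≤ C.lineal :=
    Submodule.span_le.2 fun b hb => ⟨hB b hb, hneg b hb⟩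
  refine ⟨B ∪ T, by simp [hBU, hTU], ?_, eq_top_iff.2 fun x _ => ?_⟩
  · have hTcard := LinearIndependent.finset_card_le_finrank hT
    rw [hspan, finrank_top] at hBcard
    have := Finset.card_union_le B T
    lia
  · exact (hlineal (by rw [hBspan, hspan]; exact Submodule.mem_top)).1

theorem eq_zero_of_forall_dual_nonpos {S : Set (Module.Dual 𝕜 E)}
    (hS : PointedCone.hull 𝕜 S = ⊤) {w : E} (hw : ∀ u ∈ S, u w ≤ 0) : w = 0 := by
  have hle : ∀ φ : Module.Dual 𝕜 E, φ w ≤ 0 := fun φ => by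
    have hφ : φ ∈ PointedCone.hull 𝕜 S := hS ▸ Submodule.mem_top
    induction hφ using Submodule.span_induction with
    | mem u hu => exact hw u hu
    | zero => exact le_rfl
    | add u v _ _ hu hv => exact add_nonpos hu hv
    | smul c u _ hu => exact mul_nonpos_of_nonneg_of_nonpos c.2 hu
  refine (Module.forall_dual_apply_eq_zero_iff 𝕜 w).1 fun φ => (hle φ).antisymm ?_
  exact neg_nonpos.1 (hle (-φ))

end ConicHull

section Polar

variable {𝕜 E : Type*} [Field 𝕜] [LinearOrder 𝕜] [IsStrictOrderedRing 𝕜] [AddCommGroup E]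
  [Module 𝕜 E] {V : Set E} {u f : Module.Dual 𝕜 E}

/-- The vertices of the one-sided polar `{u | ∀ v ∈ V, u v ≤ 1}` of `V`, encoded as the points of
the polar whose active constraints span `E`. -/
def polarVertices (𝕜 : Type*) {E : Type*} [Field 𝕜] [LinearOrder 𝕜] [AddCommGroup E] [Module 𝕜 E]
    (V : Set E) : Set (Module.Dual 𝕜 E) :=
  {u | (∀ v ∈ V, u v ≤ 1) ∧ Submodule.span 𝕜 {v ∈ V | u v = 1} = ⊤}

theorem exists_pos_add_smul_le_one (hV : V.Finite) (hu : ∀ v ∈ V, u v ≤ 1)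
    (hf : ∀ v ∈ V, u v = 1 → f v = 0) (hpos : ∃ v ∈ V, 0 < f v) :
    ∃ t : 𝕜, 0 < t ∧ (∀ v ∈ V, (u + t • f) v ≤ 1) ∧
      {v ∈ V | (u + t • f) v ≠ 1} ⊂ {v ∈ V | u v ≠ 1} := by
  obtain ⟨v₀, ⟨hv₀, hfv₀⟩, hmin⟩ := Set.exists_min_image {v ∈ V | 0 < f v}
    (fun v => (1 - u v) / f v) (hV.sep _) hpos
  have huv₀ : u v₀ ≠ 1 := fun h => hfv₀.ne' (hf v₀ hv₀ h)
  set t := (1 - u v₀) / f v₀ with ht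
  have ht₀ : 0 < t := div_pos (sub_pos.2 ((hu v₀ hv₀).lt_of_ne huv₀)) hfv₀
  have happly : ∀ v, (u + t • f) v = u v + t * f v := fun v => rfl
  refine ⟨t, ht₀, fun v hv => ?_, fun v hv => ⟨hv.1, fun h => hv.2 ?_⟩, fun h => ?_⟩
  · rcases lt_or_ge 0 (f v) with hfv | hfv
    · have := (le_div_iff₀ hfv).1 (hmin v ⟨hv, hfv⟩)
      rw [happly]
      linarith
    · have := mul_nonpos_of_nonneg_of_nonpos ht₀.le hfv
      rw [happly]
      linarith [hu v hv]
  · rw [happly, h, hf v hv.1 h, mul_zero, add_zero]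
  · refine (h ⟨hv₀, huv₀⟩).2 ?_
    rw [happly, ht, div_mul_cancel₀ _ hfv₀.ne', add_sub_cancel]

theorem mem_hull_polarVertices (hV : V.Finite)
    (hpos : ∀ f : Module.Dual 𝕜 E, (∀ v ∈ V, f v ≤ 0) → f = 0) (hu : ∀ v ∈ V, u v ≤ 1) :
    u ∈ PointedCone.hull 𝕜 (polarVertices 𝕜 V) := by
  induction h : {v ∈ V | u v ≠ 1}.ncard using Nat.strong_induction_on generalizing u with
  | _ m ih =>
    by_cases hspan : Submodule.span 𝕜 {v ∈ V | u v = 1} = ⊤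
    · exact PointedCone.subset_hull ⟨hu, hspan⟩
    obtain ⟨f, hf₀, hf⟩ := Submodule.exists_le_ker_of_lt_top _ (lt_top_iff_ne_top.2 hspan)
    have hray : ∀ g : Module.Dual 𝕜 E, g ≠ 0 → (∀ v ∈ V, u v = 1 → g v = 0) →
        ∃ t : 𝕜, 0 < t ∧ u + t • g ∈ PointedCone.hull 𝕜 (polarVertices 𝕜 V) := by
      intro g hg₀ hg
      obtain ⟨t, ht, hle, hlt⟩ := exists_pos_add_smul_le_one hV hu hg
        (by contrapose! hg₀; exact hpos g hg₀)
      exact ⟨t, ht, ih _ (h ▸ Set.ncard_lt_ncard hlt (hV.sep _)) hle rfl⟩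
    have hfV : ∀ v ∈ V, u v = 1 → f v = 0 := fun v hv huv =>
      hf (Submodule.subset_span ⟨hv, huv⟩)
    obtain ⟨s, hs, hus⟩ := hray f hf₀ hfV
    obtain ⟨t, ht, hut⟩ := hray (-f) (neg_ne_zero.2 hf₀) fun v hv huv => by simp [hfV v hv huv]
    have hmid : (s + t) • u = t • (u + s • f) + s • (u + t • -f) := by module
    rw [← PointedCone.smul_mem_iff _ (add_pos hs ht), hmid]
    exact add_mem (PointedCone.smul_mem _ ht.le hus) (PointedCone.smul_mem _ hs.le hut)

theorem hull_polarVertices_eq_top (hV : V.Finite)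
    (hpos : ∀ f : Module.Dual 𝕜 E, (∀ v ∈ V, f v ≤ 0) → f = 0) :
    PointedCone.hull 𝕜 (polarVertices 𝕜 V) = ⊤ := by
  refine eq_top_iff.2 fun f _ => ?_
  by_cases hf₀ : f = 0
  · exact hf₀ ▸ zero_mem _
  obtain ⟨t, ht, hle, -⟩ := exists_pos_add_smul_le_one (u := 0) (f := f) hV (by simp) (by simp)
    (by contrapose! hf₀; exact hpos f hf₀)
  rw [zero_add] at hle
  exact (PointedCone.smul_mem_iff _ ht).1 (mem_hull_polarVertices hV hpos hle)

theorem exists_finset_polarVertices_forall_nonpos [FiniteDimensional 𝕜 E] (hV : V.Finite)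
    (hpos : ∀ f : Module.Dual 𝕜 E, (∀ v ∈ V, f v ≤ 0) → f = 0) :
    ∃ S : Finset (Module.Dual 𝕜 E), ↑S ⊆ polarVertices 𝕜 V ∧ S.card ≤ 2 * Module.finrank 𝕜 E ∧
      ∀ w : E, (∀ u ∈ S, u w ≤ 0) → w = 0 := by
  obtain ⟨S, hS, hcard, htop⟩ :=
    exists_finset_pointedConeHull_eq_top (hull_polarVertices_eq_top hV hpos)
  exact ⟨S, hS, by rwa [Subspace.dual_finrank_eq] at hcard,
    fun w hw => eq_zero_of_forall_dual_nonpos htop hw⟩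

end Polar

section Recenter

theorem exists_pos_add_smul_mem_of_mem_intrinsicInterior {E : Type*} [AddCommGroup E] [Module ℝ E]
    [TopologicalSpace E] [ContinuousAdd E] [ContinuousSMul ℝ E] {s : Set E} {x w : E}
    (hx : x ∈ intrinsicInterior ℝ s) (hw : w ∈ vectorSpan ℝ s) :
    ∃ δ : ℝ, 0 < δ ∧ x + δ • w ∈ s := by
  obtain ⟨a, ha, rfl⟩ := mem_intrinsicInterior.1 hx
  have hmem : ∀ δ : ℝ, (a : E) + δ • w ∈ affineSpan ℝ s := fun δ => by
    rw [add_comm]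
    refine AffineSubspace.vadd_mem_of_mem_direction ?_ a.2
    rw [direction_affineSpan]
    exact Submodule.smul_mem _ δ hw
  let path : ℝ → affineSpan ℝ s := fun δ => ⟨a + δ • w, hmem δ⟩
  have hpath : ContinuousAt path 0 := (by fun_prop : Continuous path).continuousAt
  have hpath₀ : path 0 = a := Subtype.ext (by simp [path])
  have hnhds := hpath.eventually (by rw [hpath₀]; exact mem_interior_iff_mem_nhds.1 ha)
  obtain ⟨δ, hδs, hδ⟩ :=
    ((hnhds.filter_mono nhdsWithin_le_nhds).and (self_mem_nhdsWithin (s := Set.Ioi 0))).exists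
  exact ⟨δ, hδ, hδs⟩

theorem apply_eq_zero_of_forall_le_intrinsicInterior {E : Type*} [AddCommGroup E] [Module ℝ E]
    [TopologicalSpace E] [ContinuousAdd E] [ContinuousSMul ℝ E] {s : Set E} {x : E}
    (hx : x ∈ intrinsicInterior ℝ s) {g : Module.Dual ℝ E} (hg : ∀ y ∈ s, g y ≤ g x) {w : E}
    (hw : w ∈ vectorSpan ℝ s) : g w = 0 := by
  have hle : ∀ v ∈ vectorSpan ℝ s, g v ≤ 0 := fun v hv => by
    obtain ⟨δ, hδ, hmem⟩ := exists_pos_add_smul_mem_of_mem_intrinsicInterior hx hv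
    have := hg _ hmem
    rw [map_add, map_smul, smul_eq_mul] at this
    exact nonpos_of_mul_nonpos_right (by linarith) hδ
  have := hle (-w) (neg_mem hw)
  rw [map_neg] at this
  exact (hle w hw).antisymm (by linarith)

theorem isExposed_setOf_apply_eq {E : Type*} [AddCommGroup E] [Module ℝ E] [TopologicalSpace E]
    {P : Set E} {g : StrongDual ℝ E} {c : ℝ} (hg : ∀ y ∈ P, g y ≤ c) :
    IsExposed ℝ P {y ∈ P | g y = c} := by
  rintro ⟨y₀, hy₀, hgy₀⟩
  refine ⟨g, Set.ext fun y => and_congr_right fun hy => ?_⟩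
  exact ⟨fun h z hz => (hg z hz).trans_eq h.symm,
    fun h => (hg y hy).antisymm (hgy₀.symm.trans_le (h y₀ hy₀))⟩

theorem vectorSpan_convexHull {E : Type*} [AddCommGroup E] [Module ℝ E] (W : Set E) :
    vectorSpan ℝ (convexHull ℝ W) = vectorSpan ℝ W := by
  rw [← direction_affineSpan, affineSpan_convexHull, direction_affineSpan]

variable {E : Type*} [AddCommGroup E] [Module ℝ E] {W : Set E} {x : E}
  {g : Module.Dual ℝ E}

/-- The translate `W - x`, as a subset of the linear span of `W - W`. It is a full-dimensional copy
of `W` when `x` is in the affine span of `W`. -/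
def recenter (W : Set E) (x : E) : Set (vectorSpan ℝ W) := {v | x + v ∈ W}

theorem finite_recenter (hW : W.Finite) (x : E) : (recenter W x).Finite :=
  hW.preimage fun _ _ _ _ h => Subtype.ext (add_left_cancel h)

theorem apply_le_of_forall_recenter {c : ℝ} (hx : x ∈ convexHull ℝ W)
    (hg : ∀ v ∈ recenter W x, g v ≤ c) {y : E} (hy : y ∈ convexHull ℝ W) : g y ≤ g x + c := by
  refine convexHull_min (fun v hv => ?_) (convex_halfSpace_le g.isLinear (g x + c)) hy
  have hvx : v - x ∈ vectorSpan ℝ W := by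
    rw [← vectorSpan_convexHull]
    exact vsub_mem_vectorSpan ℝ (subset_convexHull ℝ W hv) hx
  have := hg ⟨v - x, hvx⟩ (by simpa [recenter] using hv)
  rw [map_sub] at this
  exact show g v ≤ g x + c by linarith

theorem eq_zero_of_forall_recenter_nonpos [TopologicalSpace E] [ContinuousAdd E]
    [ContinuousSMul ℝ E] (hx : x ∈ intrinsicInterior ℝ (convexHull ℝ W))
    (f : Module.Dual ℝ (vectorSpan ℝ W)) (hf : ∀ v ∈ recenter W x, f v ≤ 0) : f = 0 := by
  obtain ⟨g, rfl⟩ := Subspace.dualRestrict_surjective f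
  ext w
  refine apply_eq_zero_of_forall_le_intrinsicInterior hx (fun y hy => ?_)
    ((vectorSpan_convexHull W).symm ▸ w.2)
  exact (apply_le_of_forall_recenter (intrinsicInterior_subset hx) hf hy).trans_eq (add_zero _)

theorem exists_finset_dualRestrict_mem_polarVertices [TopologicalSpace E] [ContinuousAdd E]
    [ContinuousSMul ℝ E] [FiniteDimensional ℝ E] (hW : W.Finite)
    (hx : x ∈ intrinsicInterior ℝ (convexHull ℝ W)) :
    ∃ S : Finset (Module.Dual ℝ E), S.card ≤ 2 * Module.finrank ℝ (vectorSpan ℝ W) ∧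
      (∀ u ∈ S, (vectorSpan ℝ W).dualRestrict u ∈ polarVertices ℝ (recenter W x)) ∧
      ∀ w ∈ vectorSpan ℝ W, (∀ u ∈ S, u w ≤ 0) → w = 0 := by
  classical
  obtain ⟨S, hS, hcard, hneg⟩ := exists_finset_polarVertices_forall_nonpos (finite_recenter hW x)
    (eq_zero_of_forall_recenter_nonpos hx)
  refine ⟨S.image (Subspace.dualLift _), Finset.card_image_le.trans hcard, ?_, fun w hw hSw => ?_⟩
  · refine Finset.forall_mem_image.2 fun u hu => ?_
    rw [Subspace.dualRestrict_leftInverse]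
    exact hS hu
  · refine congrArg Subtype.val (hneg ⟨w, hw⟩ fun u hu => ?_)
    rw [← Subspace.dualLift_of_mem hw]
    exact hSw _ (Finset.mem_image_of_mem _ hu)

theorem vectorSpan_le_vectorSpan_insert_of_mem_polarVertices
    (hg : (vectorSpan ℝ W).dualRestrict g ∈ polarVertices ℝ (recenter W x)) :
    vectorSpan ℝ W ≤ vectorSpan ℝ (insert x {y ∈ convexHull ℝ W | g y = g x + 1}) := by
  have hle : (⊤ : Submodule ℝ (vectorSpan ℝ W)) ≤ (vectorSpan ℝ
      (insert x {y ∈ convexHull ℝ W | g y = g x + 1})).comap (vectorSpan ℝ W).subtype := by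
    rw [← hg.2, Submodule.span_le]
    rintro v ⟨hv, hgv⟩
    have hmem : x + (v : E) ∈ {y ∈ convexHull ℝ W | g y = g x + 1} :=
      ⟨subset_convexHull ℝ W hv, (map_add g x v).trans (congrArg _ hgv)⟩
    simpa using vsub_mem_vectorSpan ℝ (Set.mem_insert_of_mem x hmem) (Set.mem_insert x _)
  exact fun w hw => hle (Submodule.mem_top (x := ⟨w, hw⟩))

theorem exists_mem_recenter_apply_eq_one [Nontrivial (vectorSpan ℝ W)]
    (hg : (vectorSpan ℝ W).dualRestrict g ∈ polarVertices ℝ (recenter W x)) :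
    ∃ v ∈ recenter W x, g v = 1 := by
  by_contra! hne
  refine bot_ne_top (α := Submodule ℝ (vectorSpan ℝ W)) ?_
  rw [← hg.2, eq_comm, Submodule.span_eq_bot]
  exact fun v hv => absurd hv.2 (hne v hv.1)

theorem linear_apply_eq_of_mem_polarVertices
    (hg : (vectorSpan ℝ W).dualRestrict g ∈ polarVertices ℝ (recenter W x)) {a : E →ᵃ[ℝ] ℝ}
    (ha : ∀ y ∈ {y ∈ convexHull ℝ W | g y = g x + 1}, a y = a x + 1) {w : E}
    (hw : w ∈ vectorSpan ℝ W) : a.linear w = g w := by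
  have heq : (vectorSpan ℝ W).dualRestrict a.linear = (vectorSpan ℝ W).dualRestrict g := by
    refine LinearMap.ext_on hg.2 fun v ⟨hv, hgv⟩ => ?_
    have hav := ha (x + v) ⟨subset_convexHull ℝ W hv, (map_add g x v).trans (congrArg _ hgv)⟩
    rw [add_comm x, ← vadd_eq_add, a.map_vadd, vadd_eq_add, add_comm, add_right_inj] at hav
    exact hav.trans hgv.symm
  exact LinearMap.congr_fun heq ⟨w, hw⟩

end Recenter

section Facets

theorem polyDim_eq_finrank_vectorSpan {n : ℕ} (P : Set (Fin n → ℝ)) :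
    polyDim P = Module.finrank ℝ (vectorSpan ℝ P) := by
  rw [polyDim, direction_affineSpan]

theorem polyDim_le {n : ℕ} (P : Set (Fin n → ℝ)) : polyDim P ≤ n :=
  (Submodule.finrank_le _).trans_eq (Module.finrank_fin_fun ℝ)

theorem IsLatticePt.add_s2 {n : ℕ} {v w : Fin n → ℝ} (hv : IsLatticePt v) (hw : IsLatticePt w) :
    IsLatticePt (v + w) := fun i => by
  obtain ⟨a, ha⟩ := hv i
  obtain ⟨b, hb⟩ := hw i
  exact ⟨a + b, by simp [ha, hb]⟩

theorem IsLatticePt.sub {n : ℕ} {v w : Fin n → ℝ} (hv : IsLatticePt v) (hw : IsLatticePt w) :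
    IsLatticePt (v - w) := fun i => by
  obtain ⟨a, ha⟩ := hv i
  obtain ⟨b, hb⟩ := hw i
  exact ⟨a - b, by simp [ha, hb]⟩

theorem IsIntegralOn.exists_int_linear_eq {n : ℕ} {P : Set (Fin n → ℝ)} {x w : Fin n → ℝ}
    {a : (Fin n → ℝ) →ᵃ[ℝ] ℝ} (ha : IsIntegralOn P a) (hx : x ∈ affineSpan ℝ P)
    (hxl : IsLatticePt x) (hw : w ∈ vectorSpan ℝ P) (hwl : IsLatticePt w) :
    ∃ z : ℤ, a.linear w = z := by
  rw [← direction_affineSpan] at hw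
  obtain ⟨p, hp⟩ := ha x hx hxl
  obtain ⟨q, hq⟩ := ha (w +ᵥ x) (AffineSubspace.vadd_mem_of_mem_direction hw hx) (hwl.add_s2 hxl)
  rw [a.map_vadd, hp, vadd_eq_add] at hq
  exact ⟨q - p, by push_cast; linarith⟩

theorem isFacet_of_mem_polarVertices {n : ℕ} {W : Set (Fin n → ℝ)} {x : Fin n → ℝ}
    {g : Module.Dual ℝ (Fin n → ℝ)} [Nontrivial (vectorSpan ℝ W)] (hx : x ∈ convexHull ℝ W)
    (hg : (vectorSpan ℝ W).dualRestrict g ∈ polarVertices ℝ (recenter W x)) :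
    IsFacet (convexHull ℝ W) {y ∈ convexHull ℝ W | g y = g x + 1} := by
  set F := {y ∈ convexHull ℝ W | g y = g x + 1}
  obtain ⟨v, hv, hgv⟩ := exists_mem_recenter_apply_eq_one hg
  refine ⟨isExposed_setOf_apply_eq (g := LinearMap.toContinuousLinearMap g)
      fun y => apply_le_of_forall_recenter hx hg.1,
    ⟨x + v, subset_convexHull ℝ W hv, by rw [map_add, hgv]⟩, ?_⟩
  have hker : vectorSpan ℝ F ≤ LinearMap.ker g := by
    rw [vectorSpan_def, Submodule.span_le]
    rintro _ ⟨a, ha, b, hb, rfl⟩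
    simp [ha.2, hb.2]
  have hlt : vectorSpan ℝ F < vectorSpan ℝ W := by
    refine lt_of_le_not_ge ?_ fun h => ?_
    · exact vectorSpan_convexHull W ▸ vectorSpan_mono ℝ (Set.sep_subset _ _)
    · exact zero_ne_one ((hker (h v.2)).symm.trans hgv)
  have hfinrank_lt := Submodule.finrank_lt_finrank_of_lt hlt
  have hfinrank_le := (Submodule.finrank_mono
    (vectorSpan_le_vectorSpan_insert_of_mem_polarVertices hg)).trans
      (finrank_vectorSpan_insert_le_set ℝ F x)
  rw [polyDim_eq_finrank_vectorSpan, polyDim_eq_finrank_vectorSpan, vectorSpan_convexHull]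
  lia

theorem IsReflexivePolytope.exists_finset_dual {n : ℕ} {W P : Set (Fin n → ℝ)}
    (hP : IsReflexivePolytope P) (hW : W.Finite) (hWP : convexHull ℝ W = P) :
    ∃ x ∈ P, ∃ S : Finset (Module.Dual ℝ (Fin n → ℝ)),
      S.card ≤ 2 * polyDim P ∧
      (∀ u ∈ S, ∀ y ∈ P, u y ≤ u x + 1) ∧
      (∀ u ∈ S, ∀ w ∈ vectorSpan ℝ P, IsLatticePt w → ∃ z : ℤ, u w = z) ∧
      ∀ w ∈ vectorSpan ℝ P, (∀ u ∈ S, u w ≤ 0) → w = 0 := by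
  subst hWP
  obtain ⟨x, hx, hxl, hfacet⟩ := hP
  have hxP := intrinsicInterior_subset hx
  obtain ⟨S, hcard, hS, hneg⟩ := exists_finset_dualRestrict_mem_polarVertices hW hx
  refine ⟨x, hxP, S, ?_, ?_, ?_, by rwa [vectorSpan_convexHull]⟩
  · rwa [polyDim_eq_finrank_vectorSpan, vectorSpan_convexHull]
  · exact fun u hu y => apply_le_of_forall_recenter hxP (hS u hu).1
  · intro u hu w hw hwl
    have : Nontrivial (vectorSpan ℝ W) := Module.nontrivial_of_finrank_pos (R := ℝ) <| by
      have := Finset.card_pos.2 ⟨u, hu⟩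
      lia
    obtain ⟨a, haint, ha⟩ := hfacet _ (isFacet_of_mem_polarVertices hxP (hS u hu))
    rw [← linear_apply_eq_of_mem_polarVertices (hS u hu) ha (vectorSpan_convexHull W ▸ hw)]
    exact haint.exists_int_linear_eq (subset_affineSpan ℝ _ hxP) hxl hw hwl

end Facets

section MinkowskiSum

theorem vectorSpan_le_vectorSpan_smul {𝕜 E : Type*} [Field 𝕜] [AddCommGroup E] [Module 𝕜 E]
    {c : 𝕜} (hc : c ≠ 0) (s : Set E) : vectorSpan 𝕜 s ≤ vectorSpan 𝕜 (c • s) := by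
  rw [vectorSpan_def, Submodule.span_le]
  rintro _ ⟨a, ha, b, hb, rfl⟩
  rw [SetLike.mem_coe, ← Submodule.smul_mem_iff _ hc]
  simpa only [vsub_eq_sub, smul_sub] using
    vsub_mem_vectorSpan 𝕜 (Set.smul_mem_smul_set (a := c) ha) (Set.smul_mem_smul_set hb)

theorem vectorSpan_le_vectorSpan_sum {𝕜 E ι : Type*} [Ring 𝕜] [AddCommGroup E] [Module 𝕜 E]
    {s : Finset ι} {P : ι → Set E} (hP : ∀ j ∈ s, (P j).Nonempty) {i : ι} (hi : i ∈ s) :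
    vectorSpan 𝕜 (P i) ≤ vectorSpan 𝕜 (∑ j ∈ s, P j) := by
  classical
  choose! r hr using hP
  have hrest : ∑ j ∈ s.erase i, r j ∈ ∑ j ∈ s.erase i, P j :=
    Set.finsetSum_mem_finsetSum _ _ _ fun j hj => hr j (Finset.mem_of_mem_erase hj)
  rw [← Finset.sum_erase_add _ _ hi, ← vectorSpan_vadd 𝕜 (P i) (∑ j ∈ s.erase i, r j)]
  refine vectorSpan_mono 𝕜 ?_
  rintro _ ⟨y, hy, rfl⟩
  exact Set.add_mem_add hrest hy

theorem image_add_right_eq_vadd {E : Type*} [AddCommGroup E] (t : E) (s : Set E) :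
    (fun x => x + t) '' s = t +ᵥ s :=
  Set.image_congr' fun x => add_comm x t

theorem mem_vadd_sum_smul_iff {𝕜 E ι : Type*} [Fintype ι] [Semiring 𝕜] [AddCommGroup E]
    [Module 𝕜 E] {P : ι → Set E} {k : ι → 𝕜} {t x : E} :
    x ∈ t +ᵥ ∑ i, k i • P i ↔ ∃ p : ι → E, (∀ i, p i ∈ P i) ∧ t + ∑ i, k i • p i = x := by
  constructor
  · rintro ⟨_, hy, rfl⟩
    obtain ⟨y, hyP, rfl⟩ := (Set.mem_finsetSum _ _ _).1 hy
    choose p hp hpy using fun i => hyP (Finset.mem_univ i)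
    exact ⟨p, hp, by simp [hpy]⟩
  · rintro ⟨p, hp, rfl⟩
    exact Set.vadd_mem_vadd_set
      (Set.finsetSum_mem_finsetSum _ _ _ fun i _ => Set.smul_mem_smul_set (hp i))

end MinkowskiSum

section LatticePolytopes

variable {n : ℕ} {P : Set (Fin n → ℝ)}

theorem IsLatticePolytope.nonempty (hP : IsLatticePolytope P) : P.Nonempty := by
  obtain ⟨V, hV, -, rfl⟩ := hP
  exact convexHull_nonempty_iff.2 hV

theorem IsLatticePolytope.subset_of_convex (hP : IsLatticePolytope P) {C : Set (Fin n → ℝ)}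
    (hC : Convex ℝ C) (h : ∀ v ∈ P, IsLatticePt v → v ∈ C) : P ⊆ C := by
  obtain ⟨V, -, hV, rfl⟩ := hP
  exact convexHull_min (fun v hv => h v (subset_convexHull ℝ _ hv) (hV v hv)) hC

theorem IsLatticePolytope.exists_isLatticePt_forall_le (hP : IsLatticePolytope P)
    (u : Module.Dual ℝ (Fin n → ℝ)) : ∃ m ∈ P, IsLatticePt m ∧ ∀ y ∈ P, u y ≤ u m := by
  obtain ⟨V, hV₀, hV, rfl⟩ := hP
  obtain ⟨m, hm, hmax⟩ := V.exists_max_image u hV₀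
  exact ⟨m, subset_convexHull ℝ _ hm, hV m hm, fun y hy =>
    convexHull_min (t := {y | u y ≤ u m}) hmax (convex_halfSpace_le u.isLinear _) hy⟩

theorem not_subsingleton_of_one_le_polyDim (hP : 1 ≤ polyDim P) : ¬P.Subsingleton := fun h => by
  rw [polyDim_eq_finrank_vectorSpan, vectorSpan_of_subsingleton ℝ h, finrank_bot] at hP
  exact absurd hP (by decide)

theorem exists_finite_convexHull_eq_vadd_sum_smul {ι : Type*} [Fintype ι]
    {P : ι → Set (Fin n → ℝ)} (hP : ∀ i, IsLatticePolytope (P i)) (k : ι → ℝ) (t : Fin n → ℝ) :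
    ∃ W : Set (Fin n → ℝ), W.Finite ∧ convexHull ℝ W = t +ᵥ ∑ i, k i • P i := by
  classical
  choose V _ _ hV using hP
  refine ⟨t +ᵥ ∑ i, k i • (V i : Set (Fin n → ℝ)), ?_, ?_⟩
  · exact_mod_cast (t +ᵥ ∑ i, k i • V i).finite_toSet
  · simp only [convexHull_vadd, convexHull_sum, convexHull_smul, hV]

theorem one_le_sum_apply_sub_of_isLatticePt (hdim : 1 ≤ polyDim P)
    {S : Finset (Module.Dual ℝ (Fin n → ℝ))}
    (hint : ∀ u ∈ S, ∀ w ∈ vectorSpan ℝ P, IsLatticePt w → ∃ z : ℤ, u w = z)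
    (hneg : ∀ w ∈ vectorSpan ℝ P, (∀ u ∈ S, u w ≤ 0) → w = 0)
    {m : Module.Dual ℝ (Fin n → ℝ) → Fin n → ℝ} (hmP : ∀ u, m u ∈ P)
    (hml : ∀ u, IsLatticePt (m u))
    (hmax : ∀ u : Module.Dual ℝ (Fin n → ℝ), ∀ y ∈ P, u y ≤ u (m u)) {v : Fin n → ℝ}
    (hv : v ∈ P) (hvl : IsLatticePt v) : 1 ≤ ∑ u ∈ S, (u (m u) - u v) := by
  obtain ⟨u, hu, hlt⟩ : ∃ u ∈ S, u v < u (m u) := by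
    by_contra! hle
    have heq : ∀ y ∈ P, y = v := fun y hy =>
      sub_eq_zero.1 <| hneg _ (vsub_mem_vectorSpan ℝ hy hv) fun u hu => by
        rw [map_sub, sub_nonpos]
        exact (hmax u y hy).trans (hle u hu)
    exact not_subsingleton_of_one_le_polyDim hdim
      fun y hy z hz => (heq y hy).trans (heq z hz).symm
  obtain ⟨z, hz⟩ := hint u hu _ (vsub_mem_vectorSpan ℝ (hmP u) hv) ((hml u).sub hvl)
  rw [vsub_eq_sub, map_sub] at hz
  have hz₁ : (1 : ℤ) ≤ z := Int.cast_pos.1 (hz ▸ sub_pos.2 hlt)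
  calc (1 : ℝ) ≤ z := by exact_mod_cast hz₁
    _ = u (m u) - u v := hz.symm
    _ ≤ ∑ u ∈ S, (u (m u) - u v) := Finset.single_le_sum
      (f := fun u : Module.Dual ℝ (Fin n → ℝ) => u (m u) - u v)
      (fun u _ => sub_nonneg.2 (hmax u v hv)) hu

theorem IsLatticePolytope.le_sum_sub_apply (hP : IsLatticePolytope P)
    {S : Finset (Module.Dual ℝ (Fin n → ℝ))} {b : Module.Dual ℝ (Fin n → ℝ) → ℝ} {c : ℝ}
    (h : ∀ v ∈ P, IsLatticePt v → c ≤ ∑ u ∈ S, (b u - u v)) {p : Fin n → ℝ} (hp : p ∈ P) :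
    c ≤ ∑ u ∈ S, (b u - u p) := by
  simp only [Finset.sum_sub_distrib, ← LinearMap.sum_apply] at h ⊢
  exact le_sub_comm.1 <| hP.subset_of_convex (convex_halfSpace_le (LinearMap.isLinear _) _)
    (fun v hv hvl => le_sub_comm.1 (h v hv hvl)) hp

end LatticePolytopes

theorem stmt2_general {n : ℕ} {ι : Type*} [Fintype ι] (P : ι → Set (Fin n → ℝ)) (k : ι → ℝ)
    (hP : ∀ i, IsLatticePolytope (P i)) (hdim : ∀ i, 1 ≤ polyDim (P i)) (hk : ∀ i, 0 < k i)
    (href : ∃ t : Fin n → ℝ, IsReflexivePolytope ((fun x => x + t) '' (∑ i, k i • P i))) :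
    ∑ i, k i ≤ 2 * polyDim (∑ i, k i • P i) := by
  obtain ⟨t, href⟩ := href
  rw [image_add_right_eq_vadd] at href
  obtain ⟨W, hW, hWQ⟩ := exists_finite_convexHull_eq_vadd_sum_smul hP k t
  obtain ⟨x, hx, S, hcard, hle, hint, hneg⟩ := href.exists_finset_dual hW hWQ
  obtain ⟨p, hp, rfl⟩ := mem_vadd_sum_smul_iff.1 hx
  rw [polyDim_eq_finrank_vectorSpan, vectorSpan_vadd, ← polyDim_eq_finrank_vectorSpan] at hcard
  rw [vectorSpan_vadd] at hint hneg
  have hspan : ∀ i, vectorSpan ℝ (P i) ≤ vectorSpan ℝ (∑ i, k i • P i) := fun i =>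
    (vectorSpan_le_vectorSpan_smul (hk i).ne' (P i)).trans <| vectorSpan_le_vectorSpan_sum
      (P := fun i => k i • P i) (fun j _ => (hP j).nonempty.smul_set) (Finset.mem_univ i)
  choose m hmP hml hmax using fun u i => (hP i).exists_isLatticePt_forall_le u
  have hlower : ∀ i, 1 ≤ ∑ u ∈ S, (u (m u i) - u (p i)) := fun i =>
    (hP i).le_sum_sub_apply (fun v hv hvl => one_le_sum_apply_sub_of_isLatticePt (hdim i)
      (fun u hu w hw => hint u hu w (hspan i hw)) (fun w hw => hneg w (hspan i hw))
      (hmP · i) (hml · i) (hmax · i) hv hvl) (hp i)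
  have hupper : ∀ u ∈ S, ∑ i, k i * (u (m u i) - u (p i)) ≤ 1 := fun u hu => by
    have := hle u hu _ (mem_vadd_sum_smul_iff.2 ⟨m u, hmP u, rfl⟩)
    simp only [map_add, map_sum, map_smul, smul_eq_mul] at this
    simp only [mul_sub, Finset.sum_sub_distrib]
    linarith
  calc ∑ i, k i ≤ ∑ i, k i * ∑ u ∈ S, (u (m u i) - u (p i)) :=
        Finset.sum_le_sum fun i _ => le_mul_of_one_le_right (hk i).le (hlower i)
    _ = ∑ u ∈ S, ∑ i, k i * (u (m u i) - u (p i)) := by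
        simp only [Finset.mul_sum]
        exact Finset.sum_comm
    _ ≤ ∑ _u ∈ S, (1 : ℝ) := Finset.sum_le_sum hupper
    _ = S.card := by simp
    _ ≤ 2 * polyDim (∑ i, k i • P i) := by exact_mod_cast hcard

/-- If `P_1, …, P_l ⊆ ℝ^n` are lattice polytopes of dimension at least one and
`k_1 P_1 + ⋯ + k_l P_l` is reflexive up to a lattice translation (with all `k_i ≥ 1`),
then `k_1 + ⋯ + k_l ≤ 2n`. -/
theorem stmt2 {n l : ℕ} (P : Fin l → Set (Fin n → ℝ)) (k : Fin l → ℕ)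
    (hP : ∀ i, IsLatticePolytope (P i)) (hdim : ∀ i, 1 ≤ polyDim (P i))
    (hk : ∀ i, 1 ≤ k i)
    (href : ∃ t : Fin n → ℝ, IsLatticePt t ∧
      IsReflexivePolytope ((fun x => x + t) '' (∑ i, (k i : ℝ) • P i))) :
    (∑ i, k i) ≤ 2 * n := by
  obtain ⟨t, -, href⟩ := href
  have := stmt2_general P (fun i => (k i : ℝ)) hP hdim (fun i => Nat.cast_pos.2 (hk i)) ⟨t, href⟩
  exact (by exact_mod_cast this : ∑ i, k i ≤ _).trans (Nat.mul_le_mul_left 2 (polyDim_le _))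
end
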